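/- arXiv:1607.04728 — 4 statements merged into one kernel-verified Lean document; each statement's English description precedes it below -/
import Mathlib

section
/- Let α ≥ 1 be a real number and let x be a one-sided infinite word over A with p_x(n) = O(n^α). Then the cost satisfies c(x) ≤ min{α, 2α − 2}; equivalently, for every real β > min{α, 2α − 2} there exist a positive integer k and a language S with p_S(n) = O(n^β) such that Fac(x) ⊆ S^k. -/
open scoped ENNReal Pointwise

universe u

variable {A : Type u}

/-- The factor of `x` of length `n` starting at position `i`. -/
def wordSeg (x : ℕ → A) (i n : ℕ) : List A := (List.range n).map fun j => x (i + j)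

/-- The set of finite factors of a one-sided infinite word (including the empty word). -/
def Fac (x : ℕ → A) : Set (List A) := {u | ∃ i n, u = wordSeg x i n}

/-- The factor of a two-sided word `x` of length `n` starting at position `i`. -/
def wordSegZ (x : ℤ → A) (i : ℤ) (n : ℕ) : List A := (List.range n).map fun j => x (i + j)

/-- The set of finite factors of a two-sided infinite word (including the empty word). -/
def FacZ (x : ℤ → A) : Set (List A) := {u | ∃ (i : ℤ) (n : ℕ), u = wordSegZ x i n}

/-- The complexity of a language: the number of words of length `n` in it. -/
noncomputable def complexity (L : Set (List A)) (n : ℕ) : ℕ :=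
  {u ∈ L | u.length = n}.ncard

/-- The accumulative complexity `p*_L(n) = Σ_{i=0}^{n} p_L(i)`. -/
noncomputable def accComplexity (L : Set (List A)) (n : ℕ) : ℕ :=
  ∑ i ∈ Finset.range (n + 1), complexity L i

/-- Concatenation (product) of two languages. -/
def prodL (S T : Set (List A)) : Set (List A) := {w | ∃ s ∈ S, ∃ t ∈ T, w = s ++ t}

/-- `powL S k` = `S^k`, the set of concatenations of `k` elements of `S`. -/
def powL (S : Set (List A)) : ℕ → Set (List A)
  | 0 => {([] : List A)}
  | k + 1 => prodL (powL S k) S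

/-- `f(n) = O(n^α)`. -/
def PolyBound (f : ℕ → ℕ) (α : ℝ) : Prop :=
  ∃ C : ℝ, ∀ n : ℕ, 1 ≤ n → (f n : ℝ) ≤ C * (n : ℝ) ^ α

/-- The `α`-dimension `d_α(L)`: infimum of the integers `k ≥ 1` such that `L ⊆ S^k`
for some language `S` with `p_S(n) = O(n^α)`, with `inf ∅ = ⊤`. -/
noncomputable def polyDim (α : ℝ) (L : Set (List A)) : ℕ∞ :=
  sInf {k : ℕ∞ | ∃ m : ℕ, k = m ∧ 1 ≤ m ∧
    ∃ S : Set (List A), PolyBound (complexity S) α ∧ L ⊆ powL S m}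

/-- The accumulative `α`-dimension `d*_α(L)`. -/
noncomputable def polyDimStar (α : ℝ) (L : Set (List A)) : ℕ∞ :=
  sInf {k : ℕ∞ | ∃ m : ℕ, k = m ∧ 1 ≤ m ∧
    ∃ S : Set (List A), PolyBound (accComplexity S) α ∧ L ⊆ powL S m}

/-- The cost `c(L)`: infimum of the `α ≥ 0` with `d_α(L) < +∞`, with `inf ∅ = ⊤`. -/
noncomputable def cost (L : Set (List A)) : ℝ≥0∞ :=
  sInf {a : ℝ≥0∞ | ∃ α : ℝ, 0 ≤ α ∧ a = ENNReal.ofReal α ∧ polyDim α L ≠ ⊤}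

/-- A one-sided word is ultimately periodic if it is of the form `u v v v ⋯`. -/
def UltimatelyPeriodic (x : ℕ → A) : Prop :=
  ∃ N p : ℕ, 0 < p ∧ ∀ n : ℕ, N ≤ n → x (n + p) = x n

/-- A two-sided word is eventually periodic if it is periodic far enough to the right
and far enough to the left. -/
def EventuallyPeriodicZ (x : ℤ → A) : Prop :=
  (∃ p : ℕ, 0 < p ∧ ∃ N : ℤ, ∀ n : ℤ, N ≤ n → x (n + p) = x n) ∧
  (∃ p : ℕ, 0 < p ∧ ∃ N : ℤ, ∀ n : ℤ, n ≤ N → x (n - p) = x n)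

/-- A one-sided word is recurrent if each of its factors occurs infinitely often. -/
def Recurrent (x : ℕ → A) : Prop :=
  ∀ u ∈ Fac x, ∀ N : ℕ, ∃ i : ℕ, N ≤ i ∧ u = wordSeg x i u.length

/-- `u` is a right special factor for the language `F`. -/
def RightSpecial (F : Set (List A)) (u : List A) : Prop :=
  u ∈ F ∧ ∃ a b : A, a ≠ b ∧ u ++ [a] ∈ F ∧ u ++ [b] ∈ F

/-- `M` is a `D`-marker set for a word with factor set `F`: every factor of length
at least `D n` contains a factor of length `n` belonging to `M`. -/
def MarkerSet (D : ℕ) (M F : Set (List A)) : Prop :=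
  ∀ n : ℕ, 1 ≤ n → ∀ u ∈ F, D * n ≤ u.length →
    ∃ v ∈ M, v.length = n ∧ v <:+: u

/-- A language is factorial if it contains all factors of its members. -/
def IsFactorial (S : Set (List A)) : Prop := ∀ u ∈ S, ∀ v : List A, v <:+: u → v ∈ S

/-- The bound `Σ_{k ∈ I_n ∩ ℕ} p_M(2^k)(1 + 4 p(3n)/2^k)` where
`I_n = (log₂(n/(2D)), log₂(2n)]`, i.e. the sum is over natural `k` with
`n/(2D) < 2^k ≤ 2n`. -/
noncomputable def markerBound (M F : Set (List A)) (D n : ℕ) : ℝ :=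
  ∑ k ∈ (Finset.range (2 * n + 2)).filter (fun k => n < 2 * D * 2 ^ k ∧ 2 ^ k ≤ 2 * n),
    (complexity M (2 ^ k) : ℝ) * (1 + 4 * (complexity F (3 * n) : ℝ) / 2 ^ k)

-- The word `u = ∏_{i=1}^{∞} a b^i = a b a b b a b b b ⋯` over `{a,b}`, with
-- `a = false`, `b = true`: position `n` carries an `a` iff `n = (i-1)(i+2)/2` for some
-- `i ≥ 1`, i.e. iff `2n = m(m+3)` for some `m ≥ 0`.
open Classical in
noncomputable def uWord (n : ℕ) : Bool :=
  if ∃ m : ℕ, 2 * n = m * (m + 3) then false else true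

section helpers

theorem ws_length (x : ℕ → A) (i n : ℕ) : (wordSeg x i n).length = n := by
  simp [wordSeg]

theorem ws_eq_iff (x : ℕ → A) (i j n : ℕ) :
    wordSeg x i n = wordSeg x j n ↔ ∀ t, t < n → x (i + t) = x (j + t) := by
  simp [wordSeg, List.map_inj_left]

theorem ws_append (x : ℕ → A) (i m n : ℕ) :
    wordSeg x i m ++ wordSeg x (i + m) n = wordSeg x i (m + n) := by
  simp only [wordSeg, List.range_add, List.map_append, List.map_map]
  congr 1
  apply List.map_congr_left
  intro a _
  simp [Nat.add_assoc]

theorem ws_take (x : ℕ → A) (i m n : ℕ) (h : n ≤ m) :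
    (wordSeg x i m).take n = wordSeg x i n := by
  obtain ⟨d, rfl⟩ := Nat.exists_eq_add_of_le h
  rw [← ws_append]
  have := ws_length x i n
  rw [List.take_append_of_le_length (by omega), List.take_of_length_le (by omega)]

theorem ws_range_finite [Finite A] (x : ℕ → A) (m : ℕ) :
    (Set.range fun i => wordSeg x i m).Finite := by
  apply (List.finite_length_eq A m).subset
  rintro _ ⟨i, rfl⟩
  exact ws_length x i m

/-- The finset of factors of length `m`. -/
noncomputable def facF [Finite A] (x : ℕ → A) (m : ℕ) : Finset (List A) :=
  (ws_range_finite x m).toFinset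

theorem mem_facF [Finite A] (x : ℕ → A) (m : ℕ) (w : List A) :
    w ∈ facF x m ↔ ∃ i, wordSeg x i m = w := by
  simp [facF]

theorem ws_mem_facF [Finite A] (x : ℕ → A) (i m : ℕ) : wordSeg x i m ∈ facF x m :=
  (mem_facF x m _).2 ⟨i, rfl⟩

theorem complexity_fac [Finite A] (x : ℕ → A) (m : ℕ) :
    complexity (Fac x) m = (facF x m).card := by
  unfold complexity
  rw [← Set.ncard_coe_finset]
  congr 1
  ext w
  simp only [Set.mem_ofPred_eq, Finset.mem_coe, mem_facF, Fac]
  constructor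
  · rintro ⟨⟨i, n, rfl⟩, h⟩
    rw [ws_length] at h
    subst h
    exact ⟨i, rfl⟩
  · rintro ⟨i, rfl⟩
    exact ⟨⟨i, m, rfl⟩, ws_length x i m⟩

/-- Counting windows around a sparse, locally determined set of positions. -/
theorem window_count [Finite A] (x : ℕ → A) (Q : Set ℕ) (h B L : ℕ) (hh : 0 < h)
    (gap : ∀ q ∈ Q, ∀ q' ∈ Q, q < q' → q + h ≤ q')
    (loc' : ∀ q r, q + B ∈ Q → wordSeg x q L = wordSeg x r L → r + B ∈ Q)
    (f : ℕ → List A)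
    (hf : ∀ q r, q + B ∈ Q → r + B ∈ Q → wordSeg x q L = wordSeg x r L →
      f (q + B) = f (r + B)) :
    ∃ T : Finset (List A), (∀ q ∈ Q, f q ∈ T) ∧
      h * T.card ≤ B + 2 * h + (facF x (L + h)).card := by
  classical
  have h1 : h * (((Finset.range (B + h)).filter (· ∈ Q)).image f).card ≤ B + 2 * h := by
    have hle : ((Finset.range (B + h)).filter (· ∈ Q)).card ≤ (Finset.range ((B + h) / h + 1)).card := by
      apply Finset.card_le_card_of_injOn (fun q => q / h)
      · intro q hq
        simp only [Finset.coe_filter, Finset.mem_range, Set.mem_ofPred_eq] at hq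
        simp only [Finset.coe_range, Set.mem_Iio]
        exact Nat.lt_succ_of_le (Nat.div_le_div_right hq.1.le)
      · intro q hq q' hq' e
        simp only [Finset.coe_filter, Finset.mem_range, Set.mem_ofPred_eq] at hq hq' e
        have a1 := Nat.div_add_mod q h
        have a2 := Nat.div_add_mod q' h
        have a3 := Nat.mod_lt q hh
        have a4 := Nat.mod_lt q' hh
        rw [e] at a1
        rcases lt_trichotomy q q' with c | c | c
        · have := gap q hq.2 q' hq'.2 c; omega
        · exact c
        · have := gap q' hq'.2 q hq.2 c; omega
    rw [Finset.card_range] at hle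
    calc _ ≤ h * ((B + h) / h + 1) := Nat.mul_le_mul_left _ (Finset.card_image_le.trans hle)
      _ = h * ((B + h) / h) + h := by ring
      _ ≤ (B + h) + h := by gcongr; exact Nat.mul_div_le _ _
      _ = B + 2 * h := by ring
  set G : Finset (List A) := (facF x L).filter
    (fun g => ∃ q, q + h + B ∈ Q ∧ wordSeg x (q + h) L = g) with hG
  have hrep : ∀ g : List A, ∃ q, g ∈ G → (q + h + B ∈ Q ∧ wordSeg x (q + h) L = g) := by
    intro g
    by_cases hg : g ∈ G
    · obtain ⟨q, hq⟩ := (Finset.mem_filter.1 hg).2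
      exact ⟨q, fun _ => hq⟩
    · exact ⟨0, fun h => absurd h hg⟩
  choose rep hrep using hrep
  have h2 : G.card * h ≤ (facF x (L + h)).card := by
    rw [show G.card * h = (G ×ˢ Finset.range h).card by simp]
    apply Finset.card_le_card_of_injOn (fun z => wordSeg x (rep z.1 + h - z.2) (L + h))
    · intro z _
      exact ws_mem_facF _ _ _
    · rintro ⟨g, j⟩ hz ⟨g', j'⟩ hz' e
      simp only [Finset.coe_product, Set.mem_prod, Finset.mem_coe, Finset.mem_range] at hz hz' e
      obtain ⟨b1, b2⟩ := hrep g hz.1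
      obtain ⟨b1', b2'⟩ := hrep g' hz'.1
      rw [ws_eq_iff] at e
      have e1 : wordSeg x (rep g + h) L = wordSeg x (rep g' + h - j' + j) L := by
        rw [ws_eq_iff]
        intro t ht
        have := e (j + t) (by omega)
        rw [show rep g + h - j + (j + t) = rep g + h + t by omega] at this
        rw [this]; congr 1; omega
      have m1 := loc' _ _ b1 e1
      have hj : j = j' := by
        rcases lt_trichotomy j j' with c | c | c
        · have := gap _ m1 _ b1' (by omega); omega
        · exact c
        · have := gap _ b1' _ m1 (by omega); omega
      subst hj
      rw [show rep g' + h - j + j = rep g' + h by omega] at e1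
      rw [b2, b2'] at e1
      rw [e1]
  refine ⟨((Finset.range (B + h)).filter (· ∈ Q)).image f ∪ G.image (fun g => f (rep g + h + B)),
    ?_, ?_⟩
  · intro q hq
    rw [Finset.mem_union]
    by_cases c : q < B + h
    · left
      exact Finset.mem_image_of_mem _ (by simp [c, hq])
    · right
      obtain ⟨d, rfl⟩ : ∃ d, q = d + h + B := ⟨q - h - B, by omega⟩
      have hg : wordSeg x (d + h) L ∈ G :=
        Finset.mem_filter.2 ⟨ws_mem_facF _ _ _, d, hq, rfl⟩
      obtain ⟨b1, b2⟩ := hrep _ hg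
      exact Finset.mem_image.2 ⟨_, hg, hf _ _ b1 hq b2⟩
  · calc _ ≤ h * ((((Finset.range (B + h)).filter (· ∈ Q)).image f).card + G.card) := by
          apply Nat.mul_le_mul_left
          have u1 := Finset.card_union_le (((Finset.range (B + h)).filter (· ∈ Q)).image f)
            (G.image (fun g => f (rep g + h + B)))
          have u2 : (G.image (fun g => f (rep g + h + B))).card ≤ G.card := Finset.card_image_le
          omega
      _ ≤ _ := by rw [mul_add, mul_comm h G.card]; omega

theorem subsingleton_finset (P : List A → Prop) (hP : ∀ u w, P u → P w → u = w) :
    ∃ T : Finset (List A), (∀ w, P w → w ∈ T) ∧ T.card ≤ 1 := by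
  by_cases c : ∃ w, P w
  · obtain ⟨w, hw⟩ := c
    exact ⟨{w}, fun u hu => by simp [hP u w hu hw], by simp⟩
  · exact ⟨∅, fun u hu => absurd ⟨u, hu⟩ c, by simp⟩

/-- Occurrence of `y[0,n)` at position `q`. -/
def OccAt (x y : ℕ → A) (n q : ℕ) : Prop := ∀ i, i < n → x (q + i) = y i

theorem OccAt.congr {x y : ℕ → A} {n q r : ℕ} (h : OccAt x y n q)
    (e : ∀ t, t < n → x (q + t) = x (r + t)) : OccAt x y n r :=
  fun i hi => by rw [← e i hi, h i hi]

/-- For a given marker, a set of pieces of low complexity that allows to cut every factor in which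
the marker occurs in three pieces. -/
theorem pieces [Finite A] (x y : ℕ → A) (h : ℕ) (hh : 0 < h) :
    ∃ S : Set (List A),
      (∀ a b q, a ≤ q → q + 4 * h ≤ b → OccAt x y (4 * h) q →
        ∃ c d, a + h ≤ c ∧ c + h ≤ d ∧ d + h ≤ b ∧ wordSeg x a (c - a) ∈ S ∧
          wordSeg x c (d - c) ∈ S ∧ wordSeg x d (b - d) ∈ S) ∧
      ∀ l, ∃ T : Finset (List A), (∀ w ∈ S, w.length = l → w ∈ T) ∧
        h * T.card ≤ 2 * l + 9 * h + 2 * (facF x (2 * l + 7 * h)).card := by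
  classical
  have hper : ∃ p, 0 < p ∧ ∀ i, i + p < 4 * h → y i = y (i + p) :=
    ⟨4 * h, by omega, fun i hi => by omega⟩
  obtain ⟨p, ⟨hp0, hp⟩, hpmin⟩ : ∃ p, (0 < p ∧ ∀ i, i + p < 4 * h → y i = y (i + p)) ∧
      ∀ d, (0 < d ∧ ∀ i, i + d < 4 * h → y i = y (i + d)) → p ≤ d :=
    ⟨Nat.find hper, Nat.find_spec hper, fun d hd => Nat.find_min' hper hd⟩
  set Occ := OccAt x y (4 * h) with hOcc
  have hdist : ∀ q d, 0 < d → Occ q → Occ (q + d) → p ≤ d := by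
    intro q d hd h1 h2
    apply hpmin
    refine ⟨hd, fun i hi => ?_⟩
    rw [← h1 (i + d) hi, ← h2 i (by omega)]
    congr 1; omega
  -- the two sparse sets of positions
  set QL : Set ℕ := {q | Occ q ∧ (p ≤ h → p ≤ q → ¬ Occ (q - p))} with hQL
  set QR : Set ℕ := {q | Occ q ∧ (p ≤ h → ¬ Occ (q + p))} with hQR
  have gapL : ∀ q ∈ QL, ∀ q' ∈ QL, q < q' → q + h ≤ q' := by
    rintro q ⟨h1, -⟩ q' ⟨h2, h3⟩ hlt
    by_contra hc
    obtain ⟨d, rfl⟩ := Nat.exists_eq_add_of_lt hlt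
    have hpd := hdist q (d + 1) (by omega) h1 h2
    apply h3 (by omega) (by omega)
    intro i hi
    by_cases c : i < p
    · have := h1 (d + 1 - p + i) (by omega)
      rw [show q + d + 1 - p + i = q + (d + 1 - p + i) by omega, this]
      rw [hp _ (by omega)]
      have e1 := h1 (d + 1 - p + i + p) (by omega)
      have e2 := h2 i (by omega)
      rw [← e1, ← e2]; congr 1; omega
    · have := h2 (i - p) (by omega)
      rw [show q + d + 1 - p + i = q + d + 1 + (i - p) by omega, this, hp _ (by omega)]
      congr 1; omega
  have gapR : ∀ q ∈ QR, ∀ q' ∈ QR, q < q' → q + h ≤ q' := by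
    rintro q ⟨h1, h3⟩ q' ⟨h2, -⟩ hlt
    by_contra hc
    obtain ⟨d, rfl⟩ := Nat.exists_eq_add_of_lt hlt
    have hpd := hdist q (d + 1) (by omega) h1 h2
    apply h3 (by omega)
    intro i hi
    by_cases c : i + p < 4 * h
    · rw [show q + p + i = q + (i + p) by omega, h1 _ c, hp i c]
    · have e1 := h1 i hi
      have e2 := h2 (i - (d + 1)) (by omega)
      have e3 := h2 (i - (d + 1) + p) (by omega)
      have e4 := hp (i - (d + 1)) (by omega)
      rw [← e1, show q + i = q + d + 1 + (i - (d + 1)) by omega, e2, e4, ← e3]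
      congr 1; omega
  set PL : List A → Prop := fun w => ∃ q ∈ QL, ∃ s l, s + l = q + h ∧ w = wordSeg x s l with hPL
  set PR : List A → Prop := fun w => ∃ q ∈ QR, ∃ l, w = wordSeg x (q + 3 * h) l with hPR
  set PL' : List A → Prop := fun w => ∃ q s l, p ≤ h ∧ Occ q ∧ q ≤ s ∧ s + l = q + p + h ∧
    w = wordSeg x s l with hPL'
  set PR' : List A → Prop := fun w => ∃ q l, p ≤ h ∧ Occ (q + p) ∧ l ≤ p + h ∧
    w = wordSeg x (q + 3 * h) l with hPR'
  set PM : List A → Prop := fun w => ∃ q i, (∀ t, t ≤ i → Occ (q + t * p)) ∧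
    w = wordSeg x (q + h) (i * p + 2 * h) with hPM
  refine ⟨{w | PL w ∨ PR w ∨ PL' w ∨ PR' w ∨ PM w}, ?_, ?_⟩
  · intro a b q0 haq0 hq0b hq0
    -- the leftmost occurrence
    have hex : ∃ q, a ≤ q ∧ q + 4 * h ≤ b ∧ Occ q := ⟨q0, haq0, hq0b, hq0⟩
    obtain ⟨q, ⟨haq, hqb, hq⟩, hqmin⟩ : ∃ q, (a ≤ q ∧ q + 4 * h ≤ b ∧ Occ q) ∧
        ∀ r, (a ≤ r ∧ r + 4 * h ≤ b ∧ Occ r) → q ≤ r :=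
      ⟨Nat.find hex, Nat.find_spec hex, fun d hd => Nat.find_min' hex hd⟩
    -- the chain
    obtain ⟨i, hi1, hi2, hi3⟩ : ∃ i, (∀ t, t ≤ i → Occ (q + t * p)) ∧ q + i * p + 4 * h ≤ b ∧
        (p ≤ h → Occ (q + i * p + p) → b < q + i * p + p + 4 * h) := by
      have hb : ∃ i, ¬ (Occ (q + i * p) ∧ q + i * p + 4 * h ≤ b) := by
        refine ⟨b + 1, fun hc => ?_⟩
        have : b + 1 ≤ (b + 1) * p := Nat.le_mul_of_pos_right _ hp0
        omega
      set i := Nat.find hb with hi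
      have s1 := Nat.find_spec hb
      have s2 : ∀ t, t < i → (Occ (q + t * p) ∧ q + t * p + 4 * h ≤ b) :=
        fun t ht => not_not.1 (Nat.find_min hb ht)
      rw [← hi] at s1
      have i0 : i ≠ 0 := by
        intro h0
        rw [h0] at s1
        apply s1
        simpa using ⟨hq, hqb⟩
      obtain ⟨j, hj⟩ := Nat.exists_eq_succ_of_ne_zero i0
      rw [hj] at s1 s2
      refine ⟨j, fun t ht => (s2 t (by omega)).1, (s2 j (by omega)).2, ?_⟩
      intro _ ho
      by_contra hc
      apply s1
      rw [Nat.succ_eq_add_one, add_mul, one_mul, ← add_assoc]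
      exact ⟨ho, by omega⟩
    refine ⟨q + h, q + i * p + 3 * h, by omega, by omega, by omega, ?_, ?_, ?_⟩
    · by_cases c : q ∈ QL
      · exact Or.inl ⟨q, c, a, _, by omega, rfl⟩
      · have : p ≤ h ∧ p ≤ q ∧ Occ (q - p) := by
          by_contra hc
          apply c
          exact ⟨hq, fun h1 h2 h3 => hc ⟨h1, h2, h3⟩⟩
        obtain ⟨c1, c2, c3⟩ := this
        have : q - p < a := by
          by_contra hc
          have := hqmin (q - p) ⟨by omega, by omega, c3⟩
          omega
        exact Or.inr (Or.inr (Or.inl ⟨q - p, a, _, c1, c3, by omega, by omega, rfl⟩))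
    · refine Or.inr (Or.inr (Or.inr (Or.inr ⟨q, i, hi1, ?_⟩)))
      congr 1; omega
    · by_cases c : q + i * p ∈ QR
      · exact Or.inr (Or.inl ⟨_, c, _, rfl⟩)
      · have : p ≤ h ∧ Occ (q + i * p + p) := by
          by_contra hc
          apply c
          exact ⟨hi1 i le_rfl, fun h1 h2 => hc ⟨h1, h2⟩⟩
        obtain ⟨c1, c3⟩ := this
        have := hi3 c1 c3
        exact Or.inr (Or.inr (Or.inr (Or.inl ⟨_, _, c1, c3, by omega, rfl⟩)))
  · intro l
    obtain ⟨T1, hT1, hc1⟩ := window_count x QL h (l + h) (2 * l + 6 * h) hh gapL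
      (by
        rintro q r ⟨h1, h2⟩ e
        rw [ws_eq_iff] at e
        refine ⟨h1.congr fun t ht => ?_, fun g1 g2 g3 => h2 g1 (by omega) (g3.congr fun t ht => ?_)⟩
        · have := e (l + h + t) (by omega)
          rwa [← add_assoc, ← add_assoc r] at this
        · have := e (l + h - p + t) (by omega)
          rw [show q + (l + h) - p + t = q + (l + h - p + t) by omega,
            show r + (l + h) - p + t = r + (l + h - p + t) by omega, this])
      (fun q => wordSeg x (q + h - l) l)
      (by
        intro q r _ _ e
        rw [ws_eq_iff] at e ⊢
        intro t ht
        have := e (2 * h + t) (by omega)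
        rw [show q + (l + h) + h - l + t = q + (2 * h + t) by omega,
            show r + (l + h) + h - l + t = r + (2 * h + t) by omega, this])
    obtain ⟨T2, hT2, hc2⟩ := window_count x QR h 0 (2 * l + 6 * h) hh gapR
      (by
        rintro q r ⟨h1, h2⟩ e
        rw [ws_eq_iff] at e
        refine ⟨h1.congr fun t ht => e t (by omega), fun g1 g3 => h2 g1 (g3.congr fun t ht => ?_)⟩
        have := e (p + t) (by omega)
        rw [show q + 0 + p + t = q + (p + t) by omega,
            show r + 0 + p + t = r + (p + t) by omega, this])
      (fun q => wordSeg x (q + 3 * h) l)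
      (by
        intro q r _ _ e
        rw [ws_eq_iff] at e ⊢
        intro t ht
        have := e (3 * h + t) (by omega)
        rw [show q + 0 + 3 * h + t = q + (3 * h + t) by omega,
            show r + 0 + 3 * h + t = r + (3 * h + t) by omega, this])
    obtain ⟨T3, hT3, hc3⟩ := subsingleton_finset (fun w => PL' w ∧ w.length = l) (by
      rintro _ _ ⟨⟨q, s, k, c1, c2, c3, c4, rfl⟩, hk⟩ ⟨⟨q', s', k', c1', c2', c3', c4', rfl⟩, hk'⟩
      rw [ws_length] at hk hk'
      subst hk hk'
      rw [ws_eq_iff]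
      intro t ht
      rw [show s + t = q + (s - q + t) by omega, show s' + t = q' + (s - q + t) by omega,
        c2 _ (by omega), c2' _ (by omega)])
    obtain ⟨T4, hT4, hc4⟩ := subsingleton_finset (fun w => PR' w ∧ w.length = l) (by
      rintro _ _ ⟨⟨q, k, c1, c2, c3, rfl⟩, hk⟩ ⟨⟨q', k', c1', c2', c3', rfl⟩, hk'⟩
      rw [ws_length] at hk hk'
      subst hk hk'
      rw [ws_eq_iff]
      intro t ht
      rw [show q + 3 * h + t = q + p + (3 * h - p + t) by omega,
        show q' + 3 * h + t = q' + p + (3 * h - p + t) by omega,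
        c2 _ (by omega), c2' _ (by omega)])
    obtain ⟨T5, hT5, hc5⟩ := subsingleton_finset (fun w => PM w ∧ w.length = l) (by
      rintro _ _ ⟨⟨q, i, c1, rfl⟩, hk⟩ ⟨⟨q', i', c1', rfl⟩, hk'⟩
      rw [ws_length] at hk hk'
      have hii : i = i' := Nat.eq_of_mul_eq_mul_right hp0 (by omega)
      subst hii
      rw [ws_eq_iff]
      intro t ht
      obtain ⟨j, r, hj, hr, e⟩ : ∃ j r, j ≤ i ∧ r < 4 * h ∧ h + t = j * p + r := by
        by_cases c : h + t < i * p
        · refine ⟨(h + t) / p, (h + t) % p, ?_, ?_, ?_⟩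
          · exact Nat.div_le_of_le_mul (by rw [mul_comm]; omega)
          · have := Nat.mod_lt (h + t) hp0
            have : p ≤ 4 * h := hpmin _ ⟨by omega, fun i hi => by omega⟩
            omega
          · have := Nat.div_add_mod (h + t) p
            rw [mul_comm] at this; omega
        · exact ⟨i, h + t - i * p, le_rfl, by omega, by omega⟩
      rw [show q + h + t = q + j * p + r by omega, show q' + h + t = q' + j * p + r by omega,
        c1 j hj r hr, c1' j hj r hr])
    refine ⟨T1 ∪ (T2 ∪ (T3 ∪ (T4 ∪ T5))), ?_, ?_⟩
    · rintro w (hw | hw | hw | hw | hw) hl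
      · obtain ⟨q, hq, s, k, e, rfl⟩ := hw
        rw [ws_length] at hl
        subst hl
        have := hT1 q hq
        rw [show q + h - k = s by omega] at this
        simp [this]
      · obtain ⟨q, hq, k, rfl⟩ := hw
        rw [ws_length] at hl
        subst hl
        simp [hT2 q hq]
      · simp [hT3 w ⟨hw, hl⟩]
      · simp [hT4 w ⟨hw, hl⟩]
      · simp [hT5 w ⟨hw, hl⟩]
    · have hc : (T1 ∪ (T2 ∪ (T3 ∪ (T4 ∪ T5)))).card ≤ T1.card + T2.card + 3 := by
        have := Finset.card_union_le T1 (T2 ∪ (T3 ∪ (T4 ∪ T5)))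
        have := Finset.card_union_le T2 (T3 ∪ (T4 ∪ T5))
        have := Finset.card_union_le T3 (T4 ∪ T5)
        have := Finset.card_union_le T4 T5
        omega
      have := Nat.mul_le_mul_left h hc
      rw [show 2 * l + 6 * h + h = 2 * l + 7 * h by ring] at hc1 hc2
      rw [mul_add, mul_add] at this
      omega

/-- Markers: few words of length `n` hitting each window. -/
theorem markers [Finite A] (x : ℕ → A) (n m : ℕ) (hn : 0 < n) (hnm : n ≤ m) :
    ∃ M : Finset (List A), (∀ a, ∃ q, a ≤ q ∧ q < a + n ∧ wordSeg x q n ∈ M) ∧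
      n * M.card + n * (facF x m).card ≤
        n * (facF x (m + 1)).card + n + (facF x m).card := by
  classical
  -- first occurrence
  have hfirst : ∀ q, ∃ i, (wordSeg x i m = wordSeg x q m) ∧
      ∀ j, wordSeg x j m = wordSeg x q m → i ≤ j := fun q =>
    have hex : ∃ i, wordSeg x i m = wordSeg x q m := ⟨q, rfl⟩
    ⟨Nat.find hex, Nat.find_spec hex, fun d hd => Nat.find_min' hex hd⟩
  choose fst hf1 hf2 using hfirst
  have fst_congr : ∀ q r, wordSeg x q m = wordSeg x r m → fst q = fst r := by
    intro q r e
    apply le_antisymm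
    · exact hf2 q _ (by rw [hf1, e])
    · exact hf2 r _ (by rw [hf1, e])
  -- depth in the tree
  obtain ⟨dep, hdep⟩ : ∃ dep : ℕ → ℕ, ∀ q, dep q =
      if fst q = 0 then 0 else dep (fst q - 1) + 1 := by
    have key : ∀ N, ∃ g : ℕ → ℕ, ∀ q, q < N → g q =
        if fst q = 0 then 0 else g (fst q - 1) + 1 := by
      intro N
      induction N with
      | zero => exact ⟨fun _ => 0, fun q hq => by omega⟩
      | succ N ih =>
        obtain ⟨g, hg⟩ := ih
        refine ⟨fun q => if q < N then g q else if fst q = 0 then 0 else g (fst q - 1) + 1, ?_⟩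
        intro q hq
        have hle := hf2 q q rfl
        by_cases c0 : fst q = 0
        · by_cases c : q < N
          · simp only [c, if_true, c0]
            rw [hg q c]; simp [c0]
          · simp [c, c0]
        · have hlt : fst q - 1 < N := by omega
          by_cases c : q < N
          · simp only [c, if_true, c0, if_false, hlt]
            rw [hg q c]; simp [c0]
          · simp [c, c0, hlt]
    choose g hg using key
    have huniq : ∀ q, ∀ N N', q < N → q < N' → g N q = g N' q := by
      intro q
      induction q using Nat.strong_induction_on with
      | _ q ih =>
        intro N N' h1 h2
        rw [hg N q h1, hg N' q h2]
        by_cases c0 : fst q = 0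
        · simp [c0]
        · have hle := hf2 q q rfl
          simp only [c0, if_false]
          rw [ih (fst q - 1) (by omega) N N' (by omega) (by omega)]
    refine ⟨fun q => g (q + 1) q, fun q => ?_⟩
    have hle := hf2 q q rfl
    show g (q + 1) q = if fst q = 0 then 0 else g (fst q - 1 + 1) (fst q - 1) + 1
    rw [hg (q + 1) q (by omega)]
    by_cases c0 : fst q = 0
    · simp [c0]
    · simp only [c0, if_false]
      rw [huniq (fst q - 1) (q + 1) (fst q - 1 + 1) (by omega) (by omega)]
  have dep_congr : ∀ q r, wordSeg x q m = wordSeg x r m → dep q = dep r := by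
    intro q r e
    rw [hdep q, hdep r, fst_congr q r e]
  -- representative positions
  have hpos : ∀ v : List A, ∃ q, v ∈ facF x m → wordSeg x q m = v := by
    intro v
    by_cases c : v ∈ facF x m
    · obtain ⟨q, hq⟩ := (mem_facF x m v).1 c
      exact ⟨q, fun _ => hq⟩
    · exact ⟨0, fun h => absurd h c⟩
  choose pos hpos using hpos
  -- tree edges
  set te : List A → List A := fun v => wordSeg x (fst (pos v) - 1) (m + 1) with hte
  set V := (facF x m).erase (wordSeg x 0 m) with hV
  have hVfst : ∀ v ∈ V, fst (pos v) ≠ 0 := by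
    intro v hv h0
    obtain ⟨h1, h2⟩ := Finset.mem_erase.1 hv
    apply h1
    rw [← hpos v h2, ← hf1 (pos v), h0]
  have hte_inj : Set.InjOn te V := by
    intro v hv v' hv' e
    have a1 := hVfst v hv
    have a2 := hVfst v' hv'
    rw [← hpos v (Finset.mem_of_mem_erase hv), ← hpos v' (Finset.mem_of_mem_erase hv'),
      ← hf1 (pos v), ← hf1 (pos v'), ws_eq_iff]
    simp only [hte] at e
    rw [ws_eq_iff] at e
    intro t ht
    have := e (t + 1) (by omega)
    rw [show fst (pos v) - 1 + (t + 1) = fst (pos v) + t by omega,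
      show fst (pos v') - 1 + (t + 1) = fst (pos v') + t by omega] at this
    exact this
  -- the residue
  obtain ⟨r, hr, hrc⟩ : ∃ r ∈ Finset.range n,
      n * ((facF x m).filter (fun v => dep (pos v) % n = r)).card ≤ (facF x m).card := by
    by_contra hc
    push Not at hc
    have h1 : (facF x m).card =
        ∑ r ∈ Finset.range n, ((facF x m).filter (fun v => dep (pos v) % n = r)).card :=
      Finset.card_eq_sum_card_fiberwise (fun v _ => by
        simpa using Nat.mod_lt _ hn)
    have h2 : ∑ r ∈ Finset.range n, (facF x m).card <
        ∑ r ∈ Finset.range n, n * ((facF x m).filter (fun v => dep (pos v) % n = r)).card :=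
      Finset.sum_lt_sum_of_nonempty (by simpa using hn.ne') hc
    rw [← Finset.mul_sum, ← h1] at h2
    simp at h2
  rw [Finset.mem_range] at hr
  set E1 := facF x (m + 1) \ V.image te with hE1
  set E2 := ((facF x m).filter (fun v => dep (pos v) % n = r)).image te with hE2
  refine ⟨(E1 ∪ E2).image (List.take n), ?_, ?_⟩
  · intro a
    by_contra hc
    push Not at hc
    have hno : ∀ q, a ≤ q → q < a + n → wordSeg x q (m + 1) ∉ E1 ∪ E2 := by
      intro q h1 h2 h3
      apply hc q h1 h2
      rw [← ws_take x q (m + 1) n (by omega)]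
      exact Finset.mem_image_of_mem _ h3
    have hstep : ∀ q, a ≤ q → q < a + n → dep (q + 1) = dep q + 1 ∧ dep (q + 1) % n ≠ r := by
      intro q h1 h2
      have h3 := hno q h1 h2
      rw [Finset.mem_union, not_or, hE1, Finset.mem_sdiff, not_and_not_right] at h3
      obtain ⟨h3, h4⟩ := h3
      obtain ⟨v, hv, hve⟩ := Finset.mem_image.1 (h3 (ws_mem_facF _ _ _))
      have hvF := Finset.mem_of_mem_erase hv
      have a1 := hVfst v hv
      have hve' := hve
      simp only [hte] at hve
      rw [ws_eq_iff] at hve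
      have e1 : wordSeg x (fst (pos v) - 1) m = wordSeg x q m := by
        rw [ws_eq_iff]
        exact fun t ht => hve t (by omega)
      have e2 : wordSeg x (pos v) m = wordSeg x (q + 1) m := by
        rw [← hf1 (pos v), ws_eq_iff]
        intro t ht
        have := hve (t + 1) (by omega)
        rw [show fst (pos v) - 1 + (t + 1) = fst (pos v) + t by omega] at this
        rw [this]; congr 1; omega
      have e3 : dep (q + 1) = dep (pos v) := (dep_congr _ _ e2).symm
      refine ⟨?_, ?_⟩
      · rw [e3, hdep (pos v), if_neg a1, dep_congr _ _ e1]
      · intro e4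
        apply h4
        rw [hE2, Finset.mem_image]
        exact ⟨v, Finset.mem_filter.2 ⟨hvF, by rw [← e3]; exact e4⟩, hve'⟩
    have hdepa : ∀ t, t ≤ n → dep (a + t) = dep a + t := by
      intro t
      induction t with
      | zero => intro _; rfl
      | succ t ih =>
        intro ht
        rw [← add_assoc, (hstep (a + t) (by omega) (by omega)).1, ih (by omega)]; omega
    -- choose t with dep a + 1 + t ≡ r
    obtain ⟨t, ht, e⟩ : ∃ t, t < n ∧ (dep a + (t + 1)) % n = r := by
      refine ⟨(r + n - (dep a + 1) % n) % n, Nat.mod_lt _ hn, ?_⟩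
      have h1 := Nat.mod_lt (dep a + 1) hn
      rw [show dep a + ((r + n - (dep a + 1) % n) % n + 1) =
        (dep a + 1) + (r + n - (dep a + 1) % n) % n by omega, Nat.add_mod, Nat.mod_mod,
        ← Nat.add_mod_mod, Nat.mod_mod, Nat.add_mod_mod,
        show (dep a + 1) % n + (r + n - (dep a + 1) % n) = r + n by omega,
        Nat.add_mod_right, Nat.mod_eq_of_lt hr]
    apply (hstep (a + t) (by omega) (by omega)).2
    rw [add_assoc, hdepa (t + 1) (by omega), e]
  · have c1 : ((E1 ∪ E2).image (List.take n)).card ≤ E1.card + E2.card :=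
      Finset.card_image_le.trans (Finset.card_union_le _ _)
    have c2 : E2.card ≤ ((facF x m).filter (fun v => dep (pos v) % n = r)).card :=
      Finset.card_image_le
    have c3 : E1.card + V.card = (facF x (m + 1)).card := by
      rw [← Finset.card_image_of_injOn hte_inj]
      apply Finset.card_sdiff_add_card_eq_card
      intro w hw
      obtain ⟨v, _, rfl⟩ := Finset.mem_image.1 hw
      exact ws_mem_facF _ _ _
    have c4 : V.card + 1 = (facF x m).card :=
      Finset.card_erase_add_one (ws_mem_facF _ _ _)
    have c5 := Nat.mul_le_mul_left n c1
    have c6 := Nat.mul_le_mul_left n c2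
    have c7 := congrArg (n * ·) c3
    have c8 := congrArg (n * ·) c4
    simp only [mul_add, mul_one] at c5 c7 c8
    omega

theorem card_biUnion_real {ι : Type*} [DecidableEq (List A)] (s : Finset ι)
    (f : ι → Finset (List A)) (B : ℝ)
    (hB : ∀ a ∈ s, ((f a).card : ℝ) ≤ B) : ((s.biUnion f).card : ℝ) ≤ s.card * B := by
  calc ((s.biUnion f).card : ℝ) ≤ ((∑ a ∈ s, (f a).card : ℕ) : ℝ) := by
        exact_mod_cast Finset.card_biUnion_le
    _ = ∑ a ∈ s, ((f a).card : ℝ) := by push_cast; rfl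
    _ ≤ ∑ a ∈ s, B := Finset.sum_le_sum hB
    _ = s.card * B := by simp

theorem markers_bound [Finite A] (x : ℕ → A) (α C : ℝ) (hα : 1 ≤ α) (hC : 0 ≤ C)
    (hx : ∀ n : ℕ, 1 ≤ n → ((facF x n).card : ℝ) ≤ C * (n : ℝ) ^ α) (n : ℕ) (hn : 0 < n) :
    ∃ M : Finset (List A), (∀ a, ∃ q, a ≤ q ∧ q < a + n ∧ wordSeg x q n ∈ M) ∧
      (M.card : ℝ) ≤ 1 + 2 * C * 2 ^ α * (n : ℝ) ^ (α - 1) := by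
  obtain ⟨m, hm, hms⟩ : ∃ m ∈ Finset.Ico n (2 * n),
      (n : ℤ) * (((facF x (m + 1)).card : ℤ) - (facF x m).card) ≤ (facF x (2 * n)).card := by
    by_contra hc
    push Not at hc
    have h1 := Finset.sum_lt_sum_of_nonempty (by simp [hn]) hc
    rw [← Finset.mul_sum, Finset.sum_Ico_eq_sum_range (fun i => ((facF x (i + 1)).card : ℤ) - (facF x i).card)] at h1
    have h2 := Finset.sum_range_sub (fun k => ((facF x (n + k)).card : ℤ)) (2 * n - n)
    simp only [← add_assoc] at h2
    rw [h2] at h1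
    rw [show n + (2 * n - n) = 2 * n by omega] at h1
    simp only [Finset.sum_const, Nat.card_Ico, nsmul_eq_mul, add_zero] at h1
    rw [show 2 * n - n = n by omega] at h1
    have hn' : (0 : ℤ) < n := by exact_mod_cast hn
    have := lt_of_mul_lt_mul_left h1 hn'.le
    have : (0 : ℤ) ≤ (facF x n).card := by positivity
    omega
  rw [Finset.mem_Ico] at hm
  obtain ⟨M, hM1, hM2⟩ := markers x n m hn hm.1
  refine ⟨M, hM1, ?_⟩
  have hnR : (0 : ℝ) < n := by exact_mod_cast hn
  have e1 : ((n : ℝ)) ^ α = n * (n : ℝ) ^ (α - 1) := by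
    rw [Real.rpow_sub_one hnR.ne']; field_simp
  have e2 : ((2 * n : ℕ) : ℝ) ^ α = 2 ^ α * (n * (n : ℝ) ^ (α - 1)) := by
    push_cast
    rw [Real.mul_rpow (by norm_num) hnR.le, e1]
  have b1 := hx (2 * n) (by omega)
  have b2 : ((facF x m).card : ℝ) ≤ C * ((2 * n : ℕ) : ℝ) ^ α := by
    refine (hx m (by omega)).trans ?_
    gcongr
    exact hm.2.le
  rw [e2] at b1 b2
  have b3 : (n : ℝ) * M.card + n * (facF x m).card ≤
        n * (facF x (m + 1)).card + n + (facF x m).card := by exact_mod_cast hM2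
  have b4 : (n : ℝ) * (((facF x (m + 1)).card : ℝ) - (facF x m).card) ≤ (facF x (2 * n)).card := by
    exact_mod_cast hms
  have b5 : (n : ℝ) * M.card ≤ n * (1 + 2 * C * 2 ^ α * (n : ℝ) ^ (α - 1)) := by
    nlinarith
  exact le_of_mul_le_mul_left b5 hnR

theorem main_cover [Finite A] (x : ℕ → A) (α C : ℝ) (hα : 1 ≤ α) (hC : 0 ≤ C)
    (hx : ∀ n : ℕ, 1 ≤ n → ((facF x n).card : ℝ) ≤ C * (n : ℝ) ^ α) :
    ∃ S : Set (List A), PolyBound (complexity S) (2 * α - 2) ∧ Fac x ⊆ powL S 3 := by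
  classical
  have hM := fun k : ℕ => markers_bound x α C hα hC hx (4 * 2 ^ k) (by positivity)
  choose M hM1 hM2 using hM
  have hpos : ∀ (k : ℕ) (v : List A), ∃ q, v ∈ facF x (4 * 2 ^ k) →
      wordSeg x q (4 * 2 ^ k) = v := by
    intro k v
    by_cases c : v ∈ facF x (4 * 2 ^ k)
    · obtain ⟨q, hq⟩ := (mem_facF x _ v).1 c
      exact ⟨q, fun _ => hq⟩
    · exact ⟨0, fun h => absurd h c⟩
  choose pos hpos using hpos
  have hP := fun (k : ℕ) (v : List A) =>
    pieces x (fun i => x (pos k v + i)) (2 ^ k) (by positivity)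
  choose P hP1 hP2 using hP
  choose T hT1 hT2 using hP2
  refine ⟨{w | (w ∈ Fac x ∧ w.length < 8) ∨ ∃ k, ∃ v ∈ M k, w ∈ P k v ∧ 2 ^ k ≤ w.length ∧
    w.length ≤ 16 * 2 ^ k}, ?_, ?_⟩
  · -- complexity bound
    set C1 : ℝ := 1 + 2 * C * 2 ^ α * 4 ^ (α - 1) with hC1
    set C2 : ℝ := 41 + 32 * C * 9 ^ α with hC2
    refine ⟨C * 8 ^ α + 5 * (C1 * C2), fun l hl => ?_⟩
    have hlR : (1 : ℝ) ≤ l := by exact_mod_cast hl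
    have hl0 : (0 : ℝ) < l := by linarith
    have hone : (1 : ℝ) ≤ (l : ℝ) ^ (α - 1) := Real.one_le_rpow hlR (by linarith)
    set U0 : Finset (List A) := if l < 8 then facF x l else ∅ with hU0
    set W : ℕ → Finset (List A) := fun k => if (2 ^ k ≤ l ∧ l ≤ 16 * 2 ^ k) then
      (M k).biUnion (fun v => T k v l) else ∅ with hW
    set U : Finset (List A) := U0 ∪ (Finset.Icc (Nat.log 2 l - 4) (Nat.log 2 l)).biUnion W with hU
    have hsub : {u ∈ {w | (w ∈ Fac x ∧ w.length < 8) ∨ ∃ k, ∃ v ∈ M k, w ∈ P k v ∧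
        2 ^ k ≤ w.length ∧ w.length ≤ 16 * 2 ^ k} | u.length = l} ⊆ (U : Set (List A)) := by
      rintro w ⟨hw | ⟨k, v, hv, hw, h1, h2⟩, hlw⟩
      · obtain ⟨⟨i, n, rfl⟩, hlt⟩ := hw
        rw [ws_length] at hlw hlt
        subst hlw
        simp only [hU, hU0, hlt, if_true, Finset.coe_union]
        exact Or.inl (ws_mem_facF _ _ _)
      · rw [hlw] at h1 h2
        rw [hU, Finset.coe_union]
        right
        rw [Finset.mem_coe, Finset.mem_biUnion]
        refine ⟨k, ?_, ?_⟩
        · rw [Finset.mem_Icc]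
          constructor
          · have : Nat.log 2 l ≤ k + 4 := by
              rw [← Nat.log_pow (b := 2) (by norm_num) (k + 4)]
              apply Nat.log_mono_right
              rw [pow_add]; omega
            omega
          · exact Nat.le_log_of_pow_le (by norm_num) h1
        · simp only [hW]
          rw [if_pos ⟨h1, h2⟩, Finset.mem_biUnion]
          exact ⟨v, hv, hT1 k v l w hw hlw⟩
    have hcard : complexity {w | (w ∈ Fac x ∧ w.length < 8) ∨ ∃ k, ∃ v ∈ M k, w ∈ P k v ∧
        2 ^ k ≤ w.length ∧ w.length ≤ 16 * 2 ^ k} l ≤ U.card := by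
      unfold complexity
      rw [← Set.ncard_coe_finset U]
      exact Set.ncard_le_ncard hsub U.finite_toSet
    have hU0c : (U0.card : ℝ) ≤ C * 8 ^ α := by
      simp only [hU0]
      split_ifs with c
      · refine (hx l hl).trans ?_
        have : (l : ℝ) ≤ 8 := by exact_mod_cast c.le
        gcongr
      · simp; positivity
    have hWc : ∀ k, ((W k).card : ℝ) ≤ C1 * (l : ℝ) ^ (α - 1) * (C2 * (l : ℝ) ^ (α - 1)) := by
      intro k
      simp only [hW]
      split_ifs with c
      · obtain ⟨c1, c2⟩ := c
        have c1R : ((2 : ℝ) ^ k) ≤ l := by exact_mod_cast c1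
        have c2R : (l : ℝ) ≤ 16 * 2 ^ k := by exact_mod_cast c2
        have hh : (0 : ℝ) < 2 ^ k := by positivity
        have hMc : ((M k).card : ℝ) ≤ C1 * (l : ℝ) ^ (α - 1) := by
          refine (hM2 k).trans ?_
          have : ((4 * 2 ^ k : ℕ) : ℝ) ^ (α - 1) ≤ 4 ^ (α - 1) * (l : ℝ) ^ (α - 1) := by
            rw [← Real.mul_rpow (by norm_num) hl0.le]
            apply Real.rpow_le_rpow (by positivity) _ (by linarith)
            push_cast; linarith
          calc _ ≤ 1 * (l : ℝ) ^ (α - 1) +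
                2 * C * 2 ^ α * (4 ^ (α - 1) * (l : ℝ) ^ (α - 1)) := by
                gcongr; linarith
            _ = _ := by rw [hC1]; ring
        have hTc : ∀ v ∈ M k, ((T k v l).card : ℝ) ≤ C2 * (l : ℝ) ^ (α - 1) := by
          intro v _
          have b1 : (2 : ℝ) ^ k * (T k v l).card ≤
              2 * l + 9 * 2 ^ k + 2 * (facF x (2 * l + 7 * 2 ^ k)).card := by
            exact_mod_cast hT2 k v l
          have b2 : ((facF x (2 * l + 7 * 2 ^ k)).card : ℝ) ≤
              C * (9 ^ α * (l * (l : ℝ) ^ (α - 1))) := by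
            refine (hx _ (by omega)).trans ?_
            rw [show (l : ℝ) * (l : ℝ) ^ (α - 1) = (l : ℝ) ^ α by
              rw [Real.rpow_sub_one hl0.ne']; field_simp,
              ← Real.mul_rpow (by norm_num) hl0.le]
            have : ((2 * l + 7 * 2 ^ k : ℕ) : ℝ) ≤ 9 * l := by push_cast; linarith
            gcongr
          have b3 : C * (9 ^ α * (l * (l : ℝ) ^ (α - 1))) ≤
              C * (9 ^ α * (16 * 2 ^ k * (l : ℝ) ^ (α - 1))) := by gcongr
          have b4 : (2 : ℝ) ^ k * (T k v l).card ≤ 2 ^ k * (C2 * (l : ℝ) ^ (α - 1)) := by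
            have b5 : (2 : ℝ) ^ k * 1 ≤ 2 ^ k * (l : ℝ) ^ (α - 1) := by gcongr
            calc _ ≤ 41 * ((2 : ℝ) ^ k * 1) +
                  2 * (C * (9 ^ α * (16 * 2 ^ k * (l : ℝ) ^ (α - 1)))) := by linarith
              _ ≤ 41 * ((2 : ℝ) ^ k * (l : ℝ) ^ (α - 1)) +
                  2 * (C * (9 ^ α * (16 * 2 ^ k * (l : ℝ) ^ (α - 1)))) := by linarith
              _ = _ := by rw [hC2]; ring
          exact le_of_mul_le_mul_left b4 hh
        refine (card_biUnion_real _ _ _ hTc).trans ?_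
        gcongr
      · simp only [Finset.card_empty, Nat.cast_zero]
        positivity
    have hpow : (l : ℝ) ^ (α - 1) * (l : ℝ) ^ (α - 1) = (l : ℝ) ^ (2 * α - 2) := by
      rw [← Real.rpow_add hl0]; congr 1; ring
    have hone2 : (1 : ℝ) ≤ (l : ℝ) ^ (2 * α - 2) := Real.one_le_rpow hlR (by linarith)
    have hB := card_biUnion_real (Finset.Icc (Nat.log 2 l - 4) (Nat.log 2 l)) W _
      (fun k _ => hWc k)
    have hI : ((Finset.Icc (Nat.log 2 l - 4) (Nat.log 2 l)).card : ℝ) ≤ 5 := by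
      have : (Finset.Icc (Nat.log 2 l - 4) (Nat.log 2 l)).card ≤ 5 := by
        rw [Nat.card_Icc]; omega
      exact_mod_cast this
    calc ((complexity {w | (w ∈ Fac x ∧ w.length < 8) ∨ ∃ k, ∃ v ∈ M k, w ∈ P k v ∧
        2 ^ k ≤ w.length ∧ w.length ≤ 16 * 2 ^ k} l : ℕ) : ℝ) ≤ (U.card : ℝ) := by exact_mod_cast hcard
      _ ≤ (U0.card : ℝ) +
          ((Finset.Icc (Nat.log 2 l - 4) (Nat.log 2 l)).biUnion W).card := by
          exact_mod_cast Finset.card_union_le _ _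
      _ ≤ C * 8 ^ α * 1 + 5 * (C1 * (l : ℝ) ^ (α - 1) * (C2 * (l : ℝ) ^ (α - 1))) := by
          rw [mul_one]
          refine add_le_add hU0c (hB.trans ?_)
          gcongr
      _ = C * 8 ^ α * 1 + 5 * (C1 * C2) * ((l : ℝ) ^ (α - 1) * (l : ℝ) ^ (α - 1)) := by ring
      _ ≤ C * 8 ^ α * (l : ℝ) ^ (2 * α - 2) + 5 * (C1 * C2) * (l : ℝ) ^ (2 * α - 2) := by
          rw [hpow]; gcongr
      _ = _ := by ring
  · -- covering
    rintro _ ⟨a, N, rfl⟩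
    set S : Set (List A) := {w | (w ∈ Fac x ∧ w.length < 8) ∨ ∃ k, ∃ v ∈ M k, w ∈ P k v ∧
      2 ^ k ≤ w.length ∧ w.length ≤ 16 * 2 ^ k} with hS
    have h3 : ∀ w1 w2 w3, w1 ∈ S → w2 ∈ S → w3 ∈ S → w1 ++ w2 ++ w3 ∈ powL S 3 := by
      intro w1 w2 w3 h1 h2 h3
      exact ⟨w1 ++ w2, ⟨w1, ⟨[], rfl, w1, h1, rfl⟩, w2, h2, rfl⟩, w3, h3, rfl⟩
    by_cases c : N < 8
    · have hnil : ([] : List A) ∈ S := Or.inl ⟨⟨0, 0, rfl⟩, by simp⟩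
      have := h3 (wordSeg x a N) [] [] (Or.inl ⟨⟨a, N, rfl⟩, by rw [ws_length]; exact c⟩) hnil hnil
      simpa using this
    · set k := Nat.log 2 (N / 8) with hk
      have k1 : 2 ^ k ≤ N / 8 := Nat.pow_log_le_self 2 (by omega)
      have k2 : N / 8 < 2 ^ (k + 1) := Nat.lt_pow_succ_log_self (by norm_num) _
      rw [pow_succ] at k2
      obtain ⟨q, q1, q2, q3⟩ := hM1 k a
      set v := wordSeg x q (4 * 2 ^ k) with hv
      have hocc : OccAt x (fun i => x (pos k v + i)) (4 * 2 ^ k) q := by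
        have := hpos k v (ws_mem_facF _ _ _)
        rw [hv, ws_eq_iff] at this
        exact fun i hi => (this i hi).symm
      obtain ⟨c, d, d1, d2, d3, p1, p2, p3⟩ := hP1 k v a (a + N) q q1 (by omega) hocc
      have hmem : ∀ i n, wordSeg x i n ∈ P k v → 2 ^ k ≤ n → n ≤ 16 * 2 ^ k →
          wordSeg x i n ∈ S := by
        intro i n g1 g2 g3
        exact Or.inr ⟨k, v, q3, g1, by rw [ws_length]; exact g2, by rw [ws_length]; exact g3⟩
      have := h3 _ _ _ (hmem _ _ p1 (by omega) (by omega)) (hmem _ _ p2 (by omega) (by omega))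
        (hmem _ _ p3 (by omega) (by omega))
      have e1 := ws_append x a (c - a) (d - c)
      rw [show a + (c - a) = c by omega] at e1
      have e2 := ws_append x a (c - a + (d - c)) (a + N - d)
      rw [show a + (c - a + (d - c)) = d by omega] at e2
      rw [e1, e2, show c - a + (d - c) + (a + N - d) = N by omega] at this
      exact this

theorem PolyBound.mono {f : ℕ → ℕ} {α β : ℝ} (h : PolyBound f α) (hab : α ≤ β) :
    PolyBound f β := by
  obtain ⟨C, hC⟩ := h
  refine ⟨|C|, fun n hn => (hC n hn).trans ?_⟩
  have : (1 : ℝ) ≤ n := by exact_mod_cast hn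
  calc C * (n : ℝ) ^ α ≤ |C| * (n : ℝ) ^ α := by gcongr; exact le_abs_self C
    _ ≤ |C| * (n : ℝ) ^ β := by gcongr

end helpers

/-- if `α ≥ 1` and `p_x(n) = O(n^α)` then `c(x) ≤ min{α, 2α-2}`;
equivalently, for every `β > min{α, 2α-2}` there are `k ≥ 1` and `S` with
`p_S(n) = O(n^β)` and `Fac(x) ⊆ S^k`. -/
theorem stmt15 (A : Type u) [Fintype A] [Nonempty A] (x : ℕ → A) (α : ℝ) (hα : 1 ≤ α)
    (hx : PolyBound (complexity (Fac x)) α) :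
    cost (Fac x) ≤ ENNReal.ofReal (min α (2 * α - 2)) ∧
    ∀ β : ℝ, min α (2 * α - 2) < β →
      ∃ k : ℕ, 1 ≤ k ∧ ∃ S : Set (List A),
        PolyBound (complexity S) β ∧ Fac x ⊆ powL S k := by
  have key : ∃ k : ℕ, 1 ≤ k ∧ ∃ S : Set (List A),
        PolyBound (complexity S) (min α (2 * α - 2)) ∧ Fac x ⊆ powL S k := by
    rcases le_total α (2 * α - 2) with h | h
    · rw [min_eq_left h]
      refine ⟨1, le_rfl, Fac x, hx, fun w hw => ?_⟩
      exact ⟨[], rfl, w, hw, rfl⟩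
    · rw [min_eq_right h]
      obtain ⟨C, hC⟩ := hx
      obtain ⟨S, hS⟩ := main_cover x α |C| hα (abs_nonneg C) (fun n hn => by
        rw [← complexity_fac]
        refine (hC n hn).trans ?_
        gcongr
        exact le_abs_self C)
      exact ⟨3, by norm_num, S, hS⟩
  obtain ⟨k, hk, S, hS1, hS2⟩ := key
  refine ⟨?_, fun β hβ => ⟨k, hk, S, hS1.mono hβ.le, hS2⟩⟩
  apply sInf_le
  refine ⟨min α (2 * α - 2), le_min (by linarith) (by linarith), rfl, ?_⟩
  have : polyDim (min α (2 * α - 2)) (Fac x) ≤ (k : ℕ∞) :=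
    sInf_le ⟨k, rfl, hk, S, hS1, hS2⟩
  exact ne_top_of_le_ne_top (ENat.natCast_ne_top k) this
end

section
/- Let u = ∏_{i=1}^{∞} a b^i = a b a b b a b b b ⋯ ∈ {a,b}^ℕ. Then there do not exist languages X, Y, Z ⊆ {a,b}* with p*_X(n) = O(n), p*_Y(n) = O(n) and p*_Z(n) = O(n) such that Fac(u) ⊆ X Y Z. In particular d*_1(u) > 3 and d_0(u) > 3. -/
open scoped ENNReal Pointwise

universe u

variable {A : Type u}

namespace Stmt16

/-- words of `X` of length at most `n` -/
def upTo (X : Set (List Bool)) (n : ℕ) : Set (List Bool) := {u ∈ X | u.length ≤ n}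

lemma upTo_finite (X : Set (List Bool)) (n : ℕ) : (upTo X n).Finite :=
  (List.finite_length_le Bool n).subset fun _ h => h.2

lemma eqLen_finite (X : Set (List Bool)) (n : ℕ) : {u ∈ X | u.length = n}.Finite :=
  (List.finite_length_eq Bool n).subset fun _ h => h.2

lemma acc_eq (X : Set (List Bool)) (n : ℕ) : accComplexity X n = (upTo X n).ncard := by
  induction n with
  | zero => simp [accComplexity, complexity, upTo]
  | succ n ih =>
    unfold accComplexity at ih ⊢
    rw [Finset.sum_range_succ, ih, complexity,
      ← Set.ncard_union_eq ?_ (upTo_finite _ _) (eqLen_finite _ _)]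
    · congr 1
      ext u
      simp only [upTo, Set.mem_union, Set.mem_ofPred_eq]
      constructor
      · rintro (⟨h, h'⟩ | ⟨h, h'⟩) <;> exact ⟨h, by omega⟩
      · rintro ⟨h, h'⟩
        rcases Nat.lt_or_ge n u.length with h1 | h1
        · exact Or.inr ⟨h, by omega⟩
        · exact Or.inl ⟨h, h1⟩
    · rw [Set.disjoint_left]
      rintro u ⟨_, h⟩ ⟨_, h'⟩
      omega

/-- linear accumulative complexity, with a natural constant -/
def Lin (X : Set (List Bool)) (C : ℕ) : Prop := ∀ n, 1 ≤ n → (upTo X n).ncard ≤ C * n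

lemma Lin.mono {X : Set (List Bool)} {C D : ℕ} (h : Lin X C) (hCD : C ≤ D) : Lin X D :=
  fun n hn => (h n hn).trans (Nat.mul_le_mul_right _ hCD)

lemma lin_of_polyBound {X : Set (List Bool)} (h : PolyBound (accComplexity X) 1) :
    ∃ C, Lin X C := by
  obtain ⟨C, hC⟩ := h
  refine ⟨⌈C⌉₊, fun n hn => ?_⟩
  have := hC n hn
  rw [acc_eq, Real.rpow_one] at this
  have h2 : C ≤ (⌈C⌉₊ : ℝ) := Nat.le_ceil C
  have h3 : C * (n : ℝ) ≤ (⌈C⌉₊ : ℝ) * n := by gcongr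
  exact_mod_cast this.trans h3

lemma lin_insert_nil {X : Set (List Bool)} {C : ℕ} (h : Lin X C) :
    Lin (insert [] X) (C + 1) := by
  intro n hn
  have h1 : upTo (insert [] X) n ⊆ insert [] (upTo X n) := by
    rintro u ⟨rfl | h, h'⟩
    · exact Or.inl rfl
    · exact Or.inr ⟨h, h'⟩
  have h2 := Set.ncard_le_ncard h1 ((upTo_finite X n).insert _)
  have h3 := Set.ncard_insert_le [] (upTo X n)
  have := h n hn
  nlinarith

lemma lin_of_bounded {X : Set (List Bool)} (h : PolyBound (complexity X) 0) :
    ∃ C, Lin X C := by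
  obtain ⟨C, hC⟩ := h
  refine ⟨⌈C⌉₊ + 1, fun n hn => ?_⟩
  have h1 : ∀ n, 1 ≤ n → complexity X n ≤ ⌈C⌉₊ := by
    intro n hn
    have := hC n hn
    rw [Real.rpow_zero, mul_one] at this
    exact_mod_cast this.trans (Nat.le_ceil C)
  have h0 : complexity X 0 ≤ 1 := by
    unfold complexity
    rw [Set.ncard_le_one (eqLen_finite _ _)]
    rintro a ⟨_, ha⟩ b ⟨_, hb⟩
    rw [List.length_eq_zero_iff] at ha hb
    rw [ha, hb]
  rw [← acc_eq, accComplexity, Finset.sum_range_succ']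
  have : ∑ k ∈ Finset.range n, complexity X (k + 1) ≤ ∑ k ∈ Finset.range n, ⌈C⌉₊ :=
    Finset.sum_le_sum fun k _ => h1 _ (by omega)
  simp only [Finset.sum_const, Finset.card_range, smul_eq_mul] at this
  nlinarith

lemma lin_to_polyBound {X : Set (List Bool)} {C : ℕ} (h : Lin X C) :
    PolyBound (accComplexity X) 1 := by
  refine ⟨C, fun n hn => ?_⟩
  rw [acc_eq, Real.rpow_one]
  exact_mod_cast h n hn

/-! ### the words -/

/-- position of the `m`-th false letter -/
def pos : ℕ → ℕ
  | 0 => 0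
  | m + 1 => pos m + (m + 2)

lemma two_pos (m : ℕ) : 2 * pos m = m * (m + 3) := by
  induction m with
  | zero => rfl
  | succ m ih => rw [pos]; linarith

lemma pos_lt {a b : ℕ} (h : a < b) : pos a < pos b :=
  strictMono_nat_of_lt_succ (f := pos) (fun n => by rw [pos]; omega) h

lemma u_false (m : ℕ) : uWord (pos m) = false := by
  unfold uWord
  rw [if_pos ⟨m, two_pos m⟩]

lemma u_true (m j : ℕ) (h1 : pos m < j) (h2 : j < pos (m + 1)) : uWord j = true := by
  unfold uWord
  rw [if_neg]
  rintro ⟨l, hl⟩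
  rw [← two_pos] at hl
  have hl' : j = pos l := by omega
  subst hl'
  rcases Nat.lt_or_ge m l with h | h
  · rcases Nat.eq_or_lt_of_le h with h | h
    · subst h; simp at h2
    · exact absurd (pos_lt h) (by simp at h2 ⊢; omega)
  · rcases Nat.eq_or_lt_of_le h with h | h
    · subst h; simp at h1
    · exact absurd (pos_lt h) (by omega)

lemma seg_add (x : ℕ → Bool) (i m n : ℕ) :
    wordSeg x i (m + n) = wordSeg x i m ++ wordSeg x (i + m) n := by
  unfold wordSeg
  rw [List.range_add, List.map_append, List.map_map]
  congr 1
  apply List.map_congr_left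
  intro a _
  simp [add_assoc]

lemma seg_true (x : ℕ → Bool) (i n : ℕ) (h : ∀ j < n, x (i + j) = true) :
    wordSeg x i n = List.replicate n true := by
  unfold wordSeg
  rw [List.eq_replicate_iff]
  refine ⟨by simp, ?_⟩
  intro b hb
  simp only [List.mem_map, List.mem_range] at hb
  obtain ⟨j, hj, rfl⟩ := hb
  exact h j hj

lemma seg_pos (m t : ℕ) (ht : t ≤ m + 1) :
    wordSeg uWord (pos m) (1 + t) = false :: List.replicate t true := by
  rw [seg_add, seg_true uWord (pos m + 1) t]
  · simp [wordSeg, u_false]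
  · intro j hj
    exact u_true m _ (by omega) (by rw [pos]; omega)

/-- `a b^{k+1} a b^{k+2} ⋯`, `r` blocks -/
def core (k r : ℕ) : List Bool :=
  (List.range' k r).flatMap fun m => false :: List.replicate (m + 1) true

lemma core_head (k r : ℕ) :
    core k (r + 1) = (false :: List.replicate (k + 1) true) ++ core (k + 1) r := by
  simp [core, List.range'_succ]

lemma core_last (k r : ℕ) :
    core k (r + 1) = core k r ++ (false :: List.replicate (k + r + 1) true) := by
  simp [core, List.range'_concat]

lemma core_seg (k r : ℕ) : ∃ n, wordSeg uWord (pos k) n = core k r ∧ pos k + n = pos (k + r) := by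
  induction r with
  | zero => exact ⟨0, by simp [core, wordSeg], by simp⟩
  | succ r ih =>
    obtain ⟨n, h1, h2⟩ := ih
    refine ⟨n + (1 + (k + r + 1)), ?_, ?_⟩
    · rw [seg_add, h1, h2, seg_pos _ _ le_rfl, core_last]
    · rw [← add_assoc k r 1, pos]; omega

lemma core_count (k r : ℕ) : (core k r).count false = r := by
  induction r with
  | zero => simp [core]
  | succ r ih => rw [core_last, List.count_append, ih]; simp [List.count_replicate]

lemma core_length (k r : ℕ) : (core k r).length ≤ r * (k + r + 2) := by
  induction r with
  | zero => simp [core]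
  | succ r ih => rw [core_last, List.length_append]; simp; nlinarith

/-- the factor with `r+1` letters false -/
def wd (s k r t : ℕ) : List Bool :=
  List.replicate s true ++ core k r ++ (false :: List.replicate t true)

lemma wd_mem (s k r t : ℕ) (hs : s ≤ k) (ht : t ≤ k) : wd s k r t ∈ Fac uWord := by
  obtain ⟨n, h1, h2⟩ := core_seg k r
  have hp : s ≤ pos k := by
    have := two_pos k
    nlinarith
  refine ⟨pos k - s, s + n + (1 + t), ?_⟩
  rw [seg_add, seg_add, seg_true]
  · rw [show pos k - s + s = pos k by omega, show pos k - s + (s + n) = pos (k + r) by omega,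
      h1, seg_pos _ _ (by omega), wd]
  · intro j hj
    cases k with
    | zero => omega
    | succ k => apply u_true k <;> simp only [pos] at hp ⊢ <;> omega

lemma wd_count (s k r t : ℕ) : (wd s k r t).count false = r + 1 := by
  simp [wd, List.count_append, core_count, List.count_replicate]

/-- `b^s a b^j a` -/
def sig (s j : ℕ) : List Bool :=
  List.replicate s true ++ (false :: (List.replicate j true ++ [false]))

lemma rep_inj (s s' : ℕ) (l l' : List Bool)
    (h : List.replicate s true ++ (false :: l) = List.replicate s' true ++ (false :: l')) :
    s = s' ∧ l = l' := by
  induction s generalizing s' with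
  | zero =>
    cases s' with
    | zero => simpa using h
    | succ s' => simp [List.replicate_succ] at h
  | succ s ih =>
    cases s' with
    | zero => simp [List.replicate_succ] at h
    | succ s' =>
      simp only [List.replicate_succ, List.cons_append, List.cons.injEq, true_and] at h
      have := ih s' h
      exact ⟨by omega, this.2⟩

lemma sig_inj {s j s' j' : ℕ} {x : List Bool} (h : sig s j <+: x) (h' : sig s' j' <+: x) :
    s = s' ∧ j = j' := by
  obtain ⟨l, rfl⟩ := h
  obtain ⟨l', h⟩ := h'
  simp only [sig, List.append_assoc, List.cons_append, List.nil_append] at h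
  obtain ⟨h1, h2⟩ := rep_inj _ _ _ _ h
  obtain ⟨h3, _⟩ := rep_inj _ _ _ _ h2
  exact ⟨h1.symm, h3.symm⟩

lemma sig_wd (s k r t : ℕ) : sig s (k + 1) <+: wd s k (r + 1) t := by
  cases r with
  | zero =>
    refine ⟨List.replicate t true, ?_⟩
    simp [sig, wd, core_head, core]
  | succ r =>
    refine ⟨List.replicate (k + 2) true ++ core (k + 2) r ++ (false :: List.replicate t true), ?_⟩
    simp [sig, wd, core_head]

lemma sig_wd_rev (s k r t : ℕ) : sig t (k + r + 1) <+: (wd s k (r + 1) t).reverse := by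
  refine ⟨(List.replicate s true ++ core k r).reverse, ?_⟩
  simp [sig, wd, core_last]

lemma sig_length (s j : ℕ) : (sig s j).length = s + j + 2 := by
  simp [sig]; omega

/-- a prefix of a word starting with `sig s j` is either long, or short with at most one false -/
lemma prefix_cases {s j : ℕ} {w x : List Bool} (h : sig s j <+: w) (hx : x <+: w) :
    sig s j <+: x ∨ (x.length ≤ s + j + 1 ∧ x.count false ≤ 1) := by
  rcases Nat.lt_or_ge (s + j + 1) x.length with h1 | h1
  · left
    exact List.prefix_of_prefix_length_le h hx (by rw [sig_length]; omega)
  · right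
    refine ⟨h1, ?_⟩
    have h2 : (List.replicate s true ++ (false :: List.replicate j true)) <+: w := by
      refine List.IsPrefix.trans ⟨[false], ?_⟩ h
      simp [sig]
    have h3 := List.prefix_of_prefix_length_le hx h2 (by simp; omega)
    have := h3.sublist.count_le false
    simpa [List.count_append, List.count_replicate] using this

lemma wd_length (s k r t : ℕ) : (wd s k r t).length ≤ s + r * (k + r + 2) + 1 + t := by
  have := core_length k r
  simp [wd]; omega

lemma wd_inj {s k r t s' k' t' : ℕ} (h : wd s k (r + 1) t = wd s' k' (r + 1) t') :
    s = s' ∧ k = k' ∧ t = t' := by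
  have h1 := sig_wd s k r t
  have h2 := sig_wd_rev s k r t
  rw [h] at h1 h2
  have h3 := sig_inj h1 (sig_wd s' k' r t')
  have h4 := sig_inj h2 (sig_wd_rev s' k' r t')
  omega

/-- the words of `Y` of length at most `n` having between `r` and `r+2` letters false -/
def mids (Y : Set (List Bool)) (n r : ℕ) : Set (List Bool) :=
  {y ∈ upTo Y n | r ≤ y.count false ∧ y.count false ≤ r + 2}

lemma mids_finite (Y : Set (List Bool)) (n r : ℕ) : (mids Y n r).Finite :=
  (upTo_finite Y n).subset fun _ h => h.1

lemma key {X Y Z : Set (List Bool)} {C : ℕ} (hX : Lin X C) (hZ : Lin Z C)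
    (hF : Fac uWord ⊆ prodL (prodL X Y) Z) (r M : ℕ) (hM : r + 4 ≤ M)
    (hM2 : 12 * C * (r + 2) ≤ M) :
    M ≤ 50 * C ^ 2 * (mids Y (3 * M * (r + 2)) r).ncard := by
  classical
  have hex : ∀ p : ℕ × ℕ × ℕ, ∃ q : List Bool × List Bool × List Bool,
      (p.1 < M → p.2.1 < M → p.2.2 < M → q.1 ∈ X ∧ q.2.1 ∈ Y ∧ q.2.2 ∈ Z ∧
        wd p.1 (M + p.2.2) (r + 1) p.2.1 = q.1 ++ q.2.1 ++ q.2.2) := by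
    rintro ⟨s, t, k⟩
    by_cases h : s < M ∧ t < M ∧ k < M
    · obtain ⟨xy, ⟨x, hx, y, hy, rfl⟩, z, hz, h⟩ :=
        hF (wd_mem s (M + k) (r + 1) t (by omega) (by omega))
      exact ⟨(x, y, z), fun _ _ _ => ⟨hx, hy, hz, h⟩⟩
    · exact ⟨([], [], []), fun a b c => absurd ⟨a, b, c⟩ h⟩
  choose q hq using hex
  set n := 3 * M * (r + 2) with hn
  set T : Finset (ℕ × ℕ × ℕ) :=
    Finset.range M ×ˢ Finset.range M ×ˢ Finset.range M with hT
  have hTc : T.card = M * (M * M) := by simp [hT]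
  have hTm : ∀ p ∈ T, p.1 < M ∧ p.2.1 < M ∧ p.2.2 < M := by
    intro p hp; simpa [hT] using hp
  set T1 := T.filter (fun p => sig p.1 (M + p.2.2 + 1) <+: (q p).1) with hT1
  set T2 := T.filter (fun p => sig p.2.1 (M + p.2.2 + r + 1) <+: (q p).2.2.reverse) with hT2
  set T3 := T.filter (fun p => ¬ sig p.1 (M + p.2.2 + 1) <+: (q p).1 ∧
    ¬ sig p.2.1 (M + p.2.2 + r + 1) <+: (q p).2.2.reverse) with hT3
  have hcov : T ⊆ T1 ∪ T2 ∪ T3 := by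
    intro p hp
    simp only [hT1, hT2, hT3, Finset.mem_union, Finset.mem_filter]
    tauto
  have hlen : ∀ p ∈ T, (q p).1.length + (q p).2.1.length + (q p).2.2.length ≤ n := by
    intro p hp
    obtain ⟨a, b, c⟩ := hTm p hp
    obtain ⟨_, _, _, h⟩ := hq p a b c
    have h1 := wd_length p.1 (M + p.2.2) (r + 1) p.2.1
    rw [h] at h1
    simp only [List.length_append] at h1
    have h2 : (r + 1) * (M + p.2.2 + (r + 1) + 2) ≤ (r + 1) * (3 * M) :=
      Nat.mul_le_mul_left _ (by omega)
    rw [hn]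
    nlinarith
  have hn1 : 1 ≤ n := by rw [hn]; nlinarith
  have c1 : T1.card ≤ C * n * M := by
    have h1 : T1.card ≤ ((upTo_finite X n).toFinset ×ˢ Finset.range M).card := by
      apply Finset.card_le_card_of_injOn (fun p => ((q p).1, p.2.1))
      · intro p hp
        have hp' := (Finset.mem_filter.1 hp).1
        obtain ⟨a, b, c⟩ := hTm p hp'
        have := hlen p hp'
        simp only [Finset.coe_product, Set.mem_prod, Finset.mem_coe, Set.Finite.mem_toFinset,
          Finset.mem_range]
        exact ⟨⟨(hq p a b c).1, by omega⟩, b⟩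
      · rintro ⟨s, t, k⟩ hp ⟨s', t', k'⟩ hp' h
        have h1 := (Finset.mem_filter.1 hp).2
        have h2 := (Finset.mem_filter.1 hp').2
        simp only [Prod.mk.injEq] at h h1 h2 ⊢
        rw [h.1] at h1
        have := sig_inj h1 h2
        omega
    rw [Finset.card_product, Finset.card_range,
      ← Set.ncard_eq_toFinset_card _ (upTo_finite X n)] at h1
    exact h1.trans (Nat.mul_le_mul_right _ (hX n hn1))
  have c2 : T2.card ≤ C * n * M := by
    have h1 : T2.card ≤ ((upTo_finite Z n).toFinset ×ˢ Finset.range M).card := by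
      apply Finset.card_le_card_of_injOn (fun p => ((q p).2.2, p.1))
      · intro p hp
        have hp' := (Finset.mem_filter.1 hp).1
        obtain ⟨a, b, c⟩ := hTm p hp'
        have := hlen p hp'
        simp only [Finset.coe_product, Set.mem_prod, Finset.mem_coe, Set.Finite.mem_toFinset,
          Finset.mem_range]
        exact ⟨⟨(hq p a b c).2.2.1, by omega⟩, a⟩
      · rintro ⟨s, t, k⟩ hp ⟨s', t', k'⟩ hp' h
        have h1 := (Finset.mem_filter.1 hp).2
        have h2 := (Finset.mem_filter.1 hp').2
        simp only [Prod.mk.injEq] at h h1 h2 ⊢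
        rw [h.1] at h1
        have := sig_inj h1 h2
        omega
    rw [Finset.card_product, Finset.card_range,
      ← Set.ncard_eq_toFinset_card _ (upTo_finite Z n)] at h1
    exact h1.trans (Nat.mul_le_mul_right _ (hZ n hn1))
  have c3 : T3.card ≤ C * (5 * M) * ((mids Y n r).ncard * (C * (5 * M))) := by
    have h1 : T3.card ≤ ((upTo_finite X (5 * M)).toFinset ×ˢ (mids_finite Y n r).toFinset ×ˢ
        (upTo_finite Z (5 * M)).toFinset).card := by
      apply Finset.card_le_card_of_injOn q
      · intro p hp
        obtain ⟨hp', hp1, hp2⟩ := Finset.mem_filter.1 hp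
        obtain ⟨a, b, c⟩ := hTm p hp'
        have hl := hlen p hp'
        obtain ⟨hx, hy, hz, h⟩ := hq p a b c
        have e1 := prefix_cases (x := (q p).1) (sig_wd p.1 (M + p.2.2) r p.2.1)
          (by rw [h, List.append_assoc]; exact List.prefix_append _ _)
        have e2 := prefix_cases (x := (q p).2.2.reverse) (sig_wd_rev p.1 (M + p.2.2) r p.2.1)
          (by rw [h, List.reverse_append]; exact List.prefix_append _ _)
        replace e1 := e1.resolve_left hp1
        replace e2 := e2.resolve_left hp2
        rw [List.length_reverse, List.count_reverse] at e2
        have e3 := wd_count p.1 (M + p.2.2) (r + 1) p.2.1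
        rw [h, List.count_append, List.count_append] at e3
        simp only [Finset.coe_product, Set.mem_prod, Finset.mem_coe, Set.Finite.mem_toFinset]
        exact ⟨⟨hx, by omega⟩, ⟨⟨hy, by omega⟩, by omega, by omega⟩, ⟨hz, by omega⟩⟩
      · rintro ⟨s, t, k⟩ hp ⟨s', t', k'⟩ hp' h
        obtain ⟨a, b, c⟩ := hTm _ (Finset.mem_filter.1 hp).1
        obtain ⟨a', b', c'⟩ := hTm _ (Finset.mem_filter.1 hp').1
        have h1 := (hq _ a b c).2.2.2
        have h2 := (hq _ a' b' c').2.2.2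
        rw [h, ← h2] at h1
        have := wd_inj h1
        simp only [Prod.mk.injEq] at this ⊢
        omega
    rw [Finset.card_product, Finset.card_product, ← Set.ncard_eq_toFinset_card _ (upTo_finite X _),
      ← Set.ncard_eq_toFinset_card _ (mids_finite Y n r),
      ← Set.ncard_eq_toFinset_card _ (upTo_finite Z _)] at h1
    refine h1.trans ?_
    have hx := hX (5 * M) (by omega)
    have hz := hZ (5 * M) (by omega)
    gcongr
  have htot : M * (M * M) ≤ C * n * M + C * n * M +
      C * (5 * M) * ((mids Y n r).ncard * (C * (5 * M))) := by
    rw [← hTc]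
    refine (Finset.card_le_card hcov).trans ?_
    refine (Finset.card_union_le _ _).trans ?_
    have := Finset.card_union_le T1 T2
    omega
  set c := (mids Y n r).ncard
  have hMpos : 0 < M * M := by nlinarith
  have h5 : M * M * M ≤ M * M * (6 * C * (r + 2) + 25 * C ^ 2 * c) := by
    rw [hn] at htot
    calc M * M * M = M * (M * M) := by ring
      _ ≤ _ := htot
      _ = _ := by ring
  have h6 := Nat.le_of_mul_le_mul_left h5 hMpos
  nlinarith

lemma no_cover {X Y Z : Set (List Bool)} {C : ℕ} (hX : Lin X C) (hY : Lin Y C) (hZ : Lin Z C)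
    (hF : Fac uWord ⊆ prodL (prodL X Y) Z) : False := by
  classical
  have hdiv := Real.tendsto_sum_range_one_div_nat_succ_atTop
  obtain ⟨I, hI⟩ := (hdiv.eventually_gt_atTop (450 * (C : ℝ) ^ 3)).exists
  -- r = 3 i, M_i = n / (3 (3i+2)), i < I
  set Q := (3 * I + 2).factorial with hQ
  set q := 12 * C * (3 * I + 2) + 3 * I + 4 with hq
  set n := 3 * (q * Q) with hn
  have hdvd : ∀ i < I, (3 * i + 2) ∣ Q := fun i hi =>
    Nat.dvd_factorial (by omega) (by omega)
  have hQ0 : 0 < Q := Nat.factorial_pos _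
  have hi : ∀ i < I, q * (Q / (3 * i + 2)) ≤ 50 * C ^ 2 * (mids Y n (3 * i)).ncard := by
    intro i hi
    have h1 : 1 ≤ Q / (3 * i + 2) :=
      Nat.div_pos (Nat.le_of_dvd hQ0 (hdvd i hi)) (by omega)
    have hqM : q ≤ q * (Q / (3 * i + 2)) := Nat.le_mul_of_pos_right _ h1
    have h12 : 12 * C * (3 * i + 2) ≤ 12 * C * (3 * I + 2) := Nat.mul_le_mul_left _ (by omega)
    have := key hX hZ hF (3 * i) (q * (Q / (3 * i + 2))) (by omega) (by omega)
    have e : 3 * (q * (Q / (3 * i + 2))) * (3 * i + 2) = n := by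
      rw [hn]
      conv_rhs => rw [← Nat.div_mul_cancel (hdvd i hi)]
      ring
    rwa [e] at this
  have hsum : ∑ i ∈ Finset.range I, (mids Y n (3 * i)).ncard ≤ (upTo Y n).ncard := by
    have h1 : ∀ i, (mids Y n (3 * i)).ncard = (mids_finite Y n (3 * i)).toFinset.card :=
      fun i => Set.ncard_eq_toFinset_card _ _
    simp only [h1]
    rw [← Finset.card_biUnion, Set.ncard_eq_toFinset_card _ (upTo_finite Y n)]
    · apply Finset.card_le_card
      intro y hy
      simp only [Finset.mem_biUnion, Set.Finite.mem_toFinset] at hy ⊢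
      obtain ⟨i, _, h⟩ := hy
      exact h.1
    · intro i _ j _ hij
      rw [Function.onFun, Finset.disjoint_left]
      intro y hy hy'
      simp only [Set.Finite.mem_toFinset] at hy hy'
      have := hy.2
      have := hy'.2
      omega
  have hq0 : 0 < q := by omega
  have hn1 : 1 ≤ n := by
    have := Nat.mul_pos hq0 hQ0
    omega
  have hYn := hY n hn1
  have htot : ∑ i ∈ Finset.range I, q * (Q / (3 * i + 2)) ≤ 50 * C ^ 2 * (C * n) := by
    calc _ ≤ ∑ i ∈ Finset.range I, 50 * C ^ 2 * (mids Y n (3 * i)).ncard :=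
          Finset.sum_le_sum fun i h => hi i (Finset.mem_range.1 h)
      _ = 50 * C ^ 2 * ∑ i ∈ Finset.range I, (mids Y n (3 * i)).ncard := by
          rw [Finset.mul_sum]
      _ ≤ _ := Nat.mul_le_mul_left _ (hsum.trans hYn)
  have htot' : ∑ i ∈ Finset.range I, ((q : ℝ) * ((Q : ℝ) / (3 * i + 2))) ≤
      50 * (C : ℝ) ^ 2 * (C * (3 * (q * Q))) := by
    have h2 : ((∑ i ∈ Finset.range I, q * (Q / (3 * i + 2)) : ℕ) : ℝ) ≤
      ((50 * C ^ 2 * (C * n) : ℕ) : ℝ) := by exact_mod_cast htot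
    rw [hn] at h2
    push_cast at h2
    refine le_trans (le_of_eq ?_) h2
    apply Finset.sum_congr rfl
    intro i hi'
    rw [Nat.cast_div (hdvd i (Finset.mem_range.1 hi')) (by positivity)]
    push_cast
    rfl
  have hlow : (q * Q : ℝ) / 3 * ∑ i ∈ Finset.range I, (1 / ((i : ℝ) + 1)) ≤
      ∑ i ∈ Finset.range I, ((q : ℝ) * ((Q : ℝ) / (3 * i + 2))) := by
    rw [Finset.mul_sum]
    apply Finset.sum_le_sum
    intro i _
    have e : (q * Q : ℝ) / 3 * (1 / ((i : ℝ) + 1)) = (q * Q : ℝ) / (3 * i + 3) := by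
      field_simp
    rw [e, ← mul_div_assoc]
    gcongr
    norm_num
  have hqQ : (0 : ℝ) < q * Q := by positivity
  have : (q * Q : ℝ) / 3 * (450 * (C : ℝ) ^ 3) <
      (q * Q : ℝ) / 3 * ∑ i ∈ Finset.range I, (1 / ((i : ℝ) + 1)) := by
    gcongr
  nlinarith

lemma no_cover' {S : Set (List Bool)} {C m : ℕ} (hS : Lin S C) (hm : m ≤ 3)
    (hF : Fac uWord ⊆ powL S m) : False := by
  have h := lin_insert_nil hS
  refine no_cover h h h (fun w hw => ?_)
  have hw := hF hw
  have nilmem : [] ∈ insert [] S := Set.mem_insert _ _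
  have sub : ∀ {x}, x ∈ S → x ∈ insert [] S := fun h => Set.mem_insert_of_mem _ h
  interval_cases m
  · have : w = [] := hw
    subst this
    exact ⟨[], ⟨[], nilmem, [], nilmem, rfl⟩, [], nilmem, rfl⟩
  · obtain ⟨a, ha, b, hb, rfl⟩ := hw
    have : a = [] := ha
    subst this
    exact ⟨[], ⟨[], nilmem, [], nilmem, rfl⟩, b, sub hb, rfl⟩
  · obtain ⟨a, ⟨a', ha', c, hc, rfl⟩, b, hb, rfl⟩ := hw
    have : a' = [] := ha'
    subst this
    exact ⟨_, ⟨[], nilmem, c, sub hc, rfl⟩, b, sub hb, rfl⟩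
  · obtain ⟨_, ⟨_, ⟨a', ha', d, hd, rfl⟩, c, hc, rfl⟩, b, hb, rfl⟩ := hw
    have : a' = [] := ha'
    subst this
    exact ⟨_, ⟨d, sub hd, c, sub hc, rfl⟩, b, sub hb, rfl⟩

lemma three_lt {P : Set (List Bool) → Prop} (hP : ∀ S, P S → ∃ C, Lin S C) :
    3 < sInf {k : ℕ∞ | ∃ m : ℕ, k = m ∧ 1 ≤ m ∧
      ∃ S : Set (List Bool), P S ∧ Fac uWord ⊆ powL S m} := by
  refine lt_of_lt_of_le (b := 4) (by norm_num) (le_sInf ?_)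
  rintro k ⟨m, rfl, _, S, hS, hF⟩
  obtain ⟨C, hC⟩ := hP S hS
  by_contra hlt
  have : m ≤ 3 := by
    by_contra h
    exact hlt (by exact_mod_cast (by omega : 4 ≤ m))
  exact no_cover' hC this hF

end Stmt16

/-- for `u = ∏ a b^i`, there are no `X, Y, Z` of linear accumulative
complexity with `Fac(u) ⊆ X Y Z`; in particular `d*₁(u) > 3` and `d₀(u) > 3`. -/
theorem stmt16 :
    (¬ ∃ X Y Z : Set (List Bool),
        PolyBound (accComplexity X) 1 ∧ PolyBound (accComplexity Y) 1 ∧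
        PolyBound (accComplexity Z) 1 ∧ Fac uWord ⊆ prodL (prodL X Y) Z) ∧
    3 < polyDimStar 1 (Fac uWord) ∧ 3 < polyDim 0 (Fac uWord) := by
  refine ⟨?_, ?_, ?_⟩
  · rintro ⟨X, Y, Z, hX, hY, hZ, hF⟩
    obtain ⟨a, ha⟩ := Stmt16.lin_of_polyBound hX
    obtain ⟨b, hb⟩ := Stmt16.lin_of_polyBound hY
    obtain ⟨c, hc⟩ := Stmt16.lin_of_polyBound hZ
    exact Stmt16.no_cover (C := a + b + c) (ha.mono (by omega)) (hb.mono (by omega))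
      (hc.mono (by omega)) hF
  · exact Stmt16.three_lt (fun _ h => Stmt16.lin_of_polyBound h)
  · exact Stmt16.three_lt (fun _ h => Stmt16.lin_of_bounded h)
end

section
/- Let u = ∏_{i=1}^{∞} a b^i = a b a b b a b b b ⋯ ∈ {a,b}^ℕ. Then there exist languages S₁, S₂, S₃, S₄ ⊆ {a,b}* with p_{S₁}(n) = O(1), p_{S₄}(n) = O(1), p*_{S₂}(n) = O(n) and p*_{S₃}(n) = O(n), such that Fac(u) ⊆ S₁ S₂ S₃ S₄. Consequently d*_1(u) = 4 and d_0(u) ≤ 6. -/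
open scoped ENNReal Pointwise

universe u

variable {A : Type u}

/-! ### Block words and factors -/

/-- `blk k r = (a b^k)(a b^{k+1}) ⋯ (a b^{k+r-1})`. -/
def blk : ℕ → ℕ → List Bool
  | _, 0 => []
  | k, r + 1 => false :: (List.replicate k true ++ blk (k + 1) r)

lemma blk_add (k r s : ℕ) : blk k (r + s) = blk k r ++ blk (k + r) s := by
  induction r generalizing k with
  | zero => simp [blk]
  | succ r ih =>
    have : r + 1 + s = (r + s) + 1 := by omega
    rw [this]
    simp only [blk, ih]
    have : k + 1 + r = k + (r + 1) := by omega
    simp [this]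

lemma blk_succ' (k r : ℕ) : blk k (r + 1) = blk k r ++ false :: List.replicate (k + r) true := by
  rw [blk_add]; simp [blk]

lemma blk_length (k r : ℕ) : 2 * (blk k r).length = r * (2 * k + r + 1) := by
  induction r generalizing k with
  | zero => simp [blk]
  | succ r ih =>
    simp only [blk, List.length_cons, List.length_append, List.length_replicate]
    have := ih (k + 1)
    nlinarith

lemma blk_count (k r : ℕ) : (blk k r).count false = r := by
  induction r generalizing k with
  | zero => simp [blk]
  | succ r ih => simp [blk, ih, List.count_replicate]

lemma wordSeg_length {A : Type*} (x : ℕ → A) (i n : ℕ) : (wordSeg x i n).length = n := by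
  simp [wordSeg]

lemma wordSeg_add {A : Type*} (x : ℕ → A) (i m n : ℕ) :
    wordSeg x i (m + n) = wordSeg x i m ++ wordSeg x (i + m) n := by
  simp [wordSeg, List.range_add, add_assoc]

lemma infix_wordSeg {A : Type*} (x : ℕ → A) (N : ℕ) (w : List A) (h : w <:+: wordSeg x 0 N) :
    w ∈ Fac x := by
  obtain ⟨s, t, h⟩ := h
  have hl := congrArg List.length h
  simp only [List.length_append, wordSeg_length] at hl
  refine ⟨s.length, w.length, ?_⟩
  rw [← hl, wordSeg_add, wordSeg_add] at h
  have h1 := List.append_inj h (by simp [wordSeg_length])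
  have h2 := List.append_inj h1.1 (by simp [wordSeg_length])
  simpa using h2.2

lemma uWord_false (n : ℕ) : uWord n = false ↔ ∃ m : ℕ, 2 * n = m * (m + 3) := by
  unfold uWord; split_ifs with h <;> simp [h]

lemma uWord_block (p k j : ℕ) (hp : 2 * p = k * (k + 3)) (hj : j < k + 1) :
    uWord (p + (j + 1)) = true := by
  by_contra hc
  rw [Bool.not_eq_true, uWord_false] at hc
  obtain ⟨m, hm⟩ := hc
  have h1 : k < m := by
    by_contra hlt
    push Not at hlt
    nlinarith
  have h2 : k + 1 ≤ m := h1
  nlinarith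

lemma blk_prefix (n : ℕ) : wordSeg uWord 0 (blk 1 n).length = blk 1 n := by
  induction n with
  | zero => simp [blk, wordSeg]
  | succ n ih =>
    rw [blk_succ', List.length_append, wordSeg_add, ih]
    congr 1
    have hp : 2 * (blk 1 n).length = n * (n + 3) := by rw [blk_length]; ring
    generalize (blk 1 n).length = p at hp
    simp only [List.length_cons, List.length_replicate]
    rw [add_comm (1 + n) 1, wordSeg_add]
    have h0 : wordSeg uWord (0 + p) 1 = [false] := by
      simp only [wordSeg, List.range_one, List.map_cons, List.map_nil, add_zero, zero_add]
      rw [(uWord_false p).2 ⟨n, hp⟩]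
    rw [h0]
    simp only [List.singleton_append, List.cons.injEq, true_and]
    rw [List.eq_replicate_iff]
    refine ⟨wordSeg_length _ _ _, ?_⟩
    intro b hb
    simp only [wordSeg, List.mem_map, List.mem_range] at hb
    obtain ⟨j, hj, rfl⟩ := hb
    have := uWord_block p n j hp (by omega)
    rw [← this]; congr 1; omega

lemma fac_iff (w : List Bool) : w ∈ Fac uWord ↔ ∃ n, w <:+: blk 1 n := by
  constructor
  · rintro ⟨i, n, rfl⟩
    have hl : ∀ N, i + n ≤ N → N ≤ (blk 1 N).length := by
      intro N _
      have := blk_length 1 N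
      nlinarith
    refine ⟨i + n, ?_⟩
    rw [← blk_prefix]
    obtain ⟨d, hd⟩ := Nat.exists_eq_add_of_le (hl (i + n) le_rfl)
    rw [hd, wordSeg_add, wordSeg_add]
    exact ⟨wordSeg uWord 0 i, wordSeg uWord (0 + (i + n)) d, by simp⟩
  · rintro ⟨n, h⟩
    rw [← blk_prefix] at h
    exact infix_wordSeg _ _ _ h

lemma word_mem_fac (i k r j : ℕ) (hi : i < k) (hk : 2 ≤ k) (hj : j ≤ k + r) :
    List.replicate i true ++ (blk k r ++ false :: List.replicate j true) ∈ Fac uWord := by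
  rw [fac_iff]
  refine ⟨(k - 2) + (1 + (r + 1)), ?_⟩
  rw [blk_add, blk_add _ 1, show 1 + (k - 2) = k - 1 by omega,
    show k - 1 + 1 = k by omega, blk_succ' k r]
  obtain ⟨d, hd⟩ := Nat.exists_eq_add_of_le (show i ≤ k - 1 by omega)
  obtain ⟨e, he⟩ := Nat.exists_eq_add_of_le hj
  rw [he, show blk (k-1) 1 = false :: List.replicate (k-1) true by simp [blk], hd, add_comm i d]
  refine ⟨blk 1 (k-2) ++ false :: List.replicate d true, List.replicate e true, ?_⟩
  rw [List.replicate_add, List.replicate_add]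
  simp only [List.append_assoc, List.cons_append]

/-- Shape of the factors. -/
def Shape (w : List Bool) : Prop :=
  (∃ i, w = List.replicate i true) ∨
  ∃ i k r j, 1 ≤ k ∧ w = List.replicate i true ++ (blk k r ++ false :: List.replicate j true)

lemma Shape.tail {x : Bool} {w : List Bool} (h : Shape (x :: w)) : Shape w := by
  rcases h with ⟨i, h⟩ | ⟨i, k, r, j, hk, h⟩
  · cases i with
    | zero => simp at h
    | succ i =>
      simp only [List.replicate_succ, List.cons.injEq] at h
      exact Or.inl ⟨i, h.2⟩
  · cases i with
    | zero =>
      cases r with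
      | zero =>
        simp only [blk, List.replicate_zero, List.nil_append, List.cons.injEq] at h
        exact Or.inl ⟨j, h.2⟩
      | succ r =>
        simp only [blk, List.replicate_zero, List.nil_append, List.cons_append,
          List.cons.injEq] at h
        exact Or.inr ⟨k, k + 1, r, j, by omega, by simp [h.2]⟩
    | succ i =>
      simp only [List.replicate_succ, List.cons_append, List.cons.injEq] at h
      exact Or.inr ⟨i, k, r, j, hk, h.2⟩

lemma Shape.dropEnd {x : Bool} {w : List Bool} (h : Shape (w ++ [x])) : Shape w := by
  rcases h with ⟨i, h⟩ | ⟨i, k, r, j, hk, h⟩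
  · cases i with
    | zero => simp at h
    | succ i =>
      rw [List.replicate_succ'] at h
      exact Or.inl ⟨i, (List.append_inj' h rfl).1⟩
  · cases j with
    | zero =>
      rw [List.replicate_zero, ← List.append_assoc] at h
      have h := (List.append_inj' h rfl).1
      cases r with
      | zero => exact Or.inl ⟨i, by simpa [blk] using h⟩
      | succ r => exact Or.inr ⟨i, k, r, k + r, hk, by rw [h, blk_succ']⟩
    | succ j =>
      rw [List.replicate_succ', ← List.cons_append, ← List.append_assoc, ← List.append_assoc] at h
      have h := (List.append_inj' h rfl).1
      exact Or.inr ⟨i, k, r, j, hk, by rw [h]; simp⟩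

lemma Shape.of_right (s w : List Bool) (h : Shape (s ++ w)) : Shape w := by
  induction s with
  | nil => exact h
  | cons x s ih => exact ih (Shape.tail h)

lemma Shape.of_left (w t : List Bool) (h : Shape (w ++ t)) : Shape w := by
  induction t using List.reverseRecOn with
  | nil => simpa using h
  | append_singleton t x ih =>
    rw [← List.append_assoc] at h
    exact ih (Shape.dropEnd h)

lemma fac_shape (w : List Bool) (h : w ∈ Fac uWord) : Shape w := by
  obtain ⟨n, s, t, h⟩ := (fac_iff w).1 h
  have : Shape (blk 1 n) := by
    cases n with
    | zero => exact Or.inl ⟨0, by simp [blk]⟩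
    | succ n => exact Or.inr ⟨0, 1, n, 1 + n, le_rfl, by rw [blk_succ']; simp⟩
  rw [← h] at this
  exact Shape.of_right _ _ (Shape.of_left _ _ this)

/-! ### Counting -/

/-- words of `S` of length at most `n`. -/
noncomputable def accFin (S : Set (List Bool)) (n : ℕ) : Finset (List Bool) :=
  ((List.finite_length_le Bool n).subset
    (show {w ∈ S | w.length ≤ n} ⊆ _ from fun _ h => h.2)).toFinset

lemma mem_accFin {S : Set (List Bool)} {n : ℕ} {w : List Bool} :
    w ∈ accFin S n ↔ w ∈ S ∧ w.length ≤ n := by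
  simp [accFin]

lemma card_accFin (S : Set (List Bool)) (n : ℕ) : (accFin S n).card = accComplexity S n := by
  classical
  unfold accComplexity
  rw [Finset.card_eq_sum_card_fiberwise (f := List.length) (t := Finset.range (n + 1))]
  · apply Finset.sum_congr rfl
    intro i hi
    rw [complexity, ← Set.ncard_coe_finset]
    congr 1
    ext w
    simp only [Finset.coe_filter, mem_accFin, Set.mem_ofPred_eq]
    simp only [Finset.mem_range] at hi
    constructor
    · rintro ⟨⟨h1, _⟩, h2⟩; exact ⟨h1, h2⟩
    · rintro ⟨h1, h2⟩; exact ⟨⟨h1, by omega⟩, h2⟩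
  · intro w hw
    have := (mem_accFin.1 hw).2
    simp; omega

lemma complexity_finite (S : Set (List Bool)) (n : ℕ) : {u ∈ S | u.length = n}.Finite :=
  (List.finite_length_eq Bool n).subset fun _ h => h.2

lemma complexity_union (S T : Set (List Bool)) (n : ℕ) :
    complexity (S ∪ T) n ≤ complexity S n + complexity T n := by
  unfold complexity
  refine le_trans (Set.ncard_le_ncard ?_ ((complexity_finite S n).union (complexity_finite T n)))
    (Set.ncard_union_le _ _)
  rintro w ⟨h1 | h1, h2⟩
  · exact Or.inl ⟨h1, h2⟩
  · exact Or.inr ⟨h1, h2⟩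

lemma accComplexity_union (S T : Set (List Bool)) (n : ℕ) :
    accComplexity (S ∪ T) n ≤ accComplexity S n + accComplexity T n := by
  unfold accComplexity
  rw [← Finset.sum_add_distrib]
  exact Finset.sum_le_sum fun i _ => complexity_union S T i

lemma sum_inv_sq_aux (M : ℕ) : ∑ t ∈ Finset.range (M + 1), (1 : ℝ) / ((t + 1 : ℕ) : ℝ) ^ 2 ≤
    2 - 1 / ((M : ℝ) + 1) := by
  induction M with
  | zero => norm_num
  | succ M ih =>
    rw [Finset.sum_range_succ]
    have h : (1 : ℝ) / ((M + 1 + 1 : ℕ) : ℝ) ^ 2 ≤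
        1 / ((M : ℝ) + 1) - 1 / (((M + 1 : ℕ) : ℝ) + 1) := by
      push_cast
      rw [div_sub_div _ _ (by positivity) (by positivity), div_le_div_iff₀ (by positivity)
        (by positivity)]
      have : (0:ℝ) ≤ M := by positivity
      nlinarith
    linarith

lemma sum_inv_sq (M : ℕ) : ∑ t ∈ Finset.range M, (1 : ℝ) / ((t + 1 : ℕ) : ℝ) ^ 2 ≤ 2 := by
  cases M with
  | zero => norm_num
  | succ M =>
    have h := sum_inv_sq_aux M
    have : (0:ℝ) ≤ 1 / ((M : ℝ) + 1) := by positivity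
    linarith

/-- Families of words parametrised by `(t, c)` with `c t² ≤ 2 |f t c|` are sparse. -/
lemma acc_family (S : Set (List Bool)) (f : ℕ → ℕ → List Bool)
    (hS : ∀ w ∈ S, w = [] ∨ w = [false] ∨ ∃ t c, w = f t c ∧ 1 ≤ t ∧ 1 ≤ c ∧
      c * (t * t) ≤ 2 * w.length) (n : ℕ) : accComplexity S n ≤ 2 + 4 * n := by
  classical
  rw [← card_accFin]
  set P := (Finset.range (2 * n)).sigma fun t => Finset.Icc 1 (2 * n / ((t+1) * (t+1))) with hP
  have hsub : accFin S n ⊆ {[], [false]} ∪ P.image fun p => f (p.1 + 1) p.2 := by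
    intro w hw
    rw [mem_accFin] at hw
    rcases hS w hw.1 with h | h | ⟨t, c, h, ht, hc, hl⟩
    · simp [h]
    · simp [h]
    · apply Finset.mem_union_right
      rw [Finset.mem_image]
      refine ⟨⟨t - 1, c⟩, ?_, ?_⟩
      · simp only [hP, Finset.mem_sigma, Finset.mem_range, Finset.mem_Icc]
        rw [show t - 1 + 1 = t by omega]
        refine ⟨?_, hc, ?_⟩
        · have : t ≤ c * (t * t) := by nlinarith [Nat.mul_le_mul hc (Nat.mul_le_mul ht (le_refl t))]
          omega
        · rw [Nat.le_div_iff_mul_le (by positivity)]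
          omega
      · simp only []
        rw [show t - 1 + 1 = t by omega, h]
  have h1 : (P.card : ℝ) ≤ 4 * n := by
    rw [hP, Finset.card_sigma]
    simp only [Nat.card_Icc, Nat.add_sub_cancel]
    push_cast
    have h2 : ∀ t ∈ Finset.range (2 * n), ((2 * n / ((t+1) * (t+1)) : ℕ) : ℝ) ≤
        2 * n * (1 / ((t + 1 : ℕ) : ℝ) ^ 2) := by
      intro t _
      refine le_trans Nat.cast_div_le ?_
      push_cast
      rw [sq]; apply le_of_eq; ring
    refine le_trans (Finset.sum_le_sum h2) ?_
    rw [← Finset.mul_sum]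
    have h3 := sum_inv_sq (2 * n)
    have h5 : (0:ℝ) ≤ n := by positivity
    nlinarith
  have h1' : P.card ≤ 4 * n := by exact_mod_cast h1
  calc _ ≤ _ := Finset.card_le_card hsub
    _ ≤ _ := Finset.card_union_le _ _
    _ ≤ 2 + P.card := Nat.add_le_add Finset.card_le_two Finset.card_image_le
    _ ≤ _ := by omega

/-! ### The four languages -/

def Bs : Set (List Bool) := {w | ∃ i, w = List.replicate i true}

def M2 : Set (List Bool) := {w | ∃ k t, 1 ≤ k ∧ 2 ^ Nat.size t ∣ k + t ∧ w = blk k t}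

def M3 : Set (List Bool) :=
  {w | w = [] ∨ ∃ k t, 1 ≤ k ∧ 2 ^ Nat.size t ∣ k ∧ w = blk k t ++ [false]}

lemma Bs_complexity (n : ℕ) : complexity Bs n ≤ 1 := by
  unfold complexity
  rw [Set.ncard_le_one (complexity_finite _ _)]
  rintro a ⟨⟨i, rfl⟩, h1⟩ b ⟨⟨j, rfl⟩, h2⟩
  simp at h1 h2
  rw [h1, h2]

lemma M2_acc (n : ℕ) : accComplexity M2 n ≤ 2 + 4 * n := by
  apply acc_family M2 (fun t c => blk (c * 2 ^ Nat.size t - t) t)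
  rintro w ⟨k, t, hk, ⟨c, hc⟩, rfl⟩
  rcases Nat.eq_zero_or_pos t with rfl | ht
  · left; simp [blk]
  right; right
  have hlt := Nat.lt_size_self t
  refine ⟨t, c, ?_, ht, ?_, ?_⟩
  · rw [mul_comm c, ← hc, Nat.add_sub_cancel]
  · rcases Nat.eq_zero_or_pos c with rfl | h
    · simp at hc; omega
    · exact h
  · rw [blk_length]
    have : c * t ≤ k + t := by rw [hc, mul_comm c]; exact Nat.mul_le_mul_right _ hlt.le
    nlinarith

lemma M3_acc (n : ℕ) : accComplexity M3 n ≤ 2 + 4 * n := by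
  apply acc_family M3 (fun t c => blk (c * 2 ^ Nat.size t) t ++ [false])
  rintro w (rfl | ⟨k, t, hk, ⟨c, hc⟩, rfl⟩)
  · left; rfl
  rcases Nat.eq_zero_or_pos t with rfl | ht
  · right; left; simp [blk]
  right; right
  have hlt := Nat.lt_size_self t
  refine ⟨t, c, ?_, ht, ?_, ?_⟩
  · rw [mul_comm c, ← hc]
  · rcases Nat.eq_zero_or_pos c with rfl | h
    · simp at hc; omega
    · exact h
  · have h2 := blk_length k t
    rw [List.length_append, mul_add, h2]
    have : c * t ≤ k := by rw [hc, mul_comm c]; exact Nat.mul_le_mul_right _ hlt.le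
    nlinarith

lemma exists_center (k r : ℕ) (hk : 1 ≤ k) : ∃ m s, k ≤ m ∧ m ≤ k + r ∧ 2 ^ s ∣ m ∧
    m - k < 2 ^ s ∧ k + r - m < 2 ^ s := by
  induction r using Nat.strong_induction_on generalizing k with
  | _ r ih =>
    rcases Nat.eq_zero_or_pos r with rfl | hr
    · exact ⟨k, 0, by simp⟩
    · obtain ⟨m, s, h1, h2, h3, h4, h5⟩ :=
        ih ((k + r) / 2 - (k + 1) / 2) (by omega) ((k + 1) / 2) (by omega)
      refine ⟨2 * m, s + 1, by omega, by omega, ?_, ?_, ?_⟩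
      · rw [pow_succ, mul_comm]; exact Nat.mul_dvd_mul_left 2 h3
      · rw [pow_succ]; omega
      · rw [pow_succ]; omega

lemma decomposition : Fac uWord ⊆ prodL (prodL (prodL Bs M2) M3) Bs := by
  intro w hw
  rcases fac_shape w hw with ⟨i, rfl⟩ | ⟨i, k, r, j, hk, rfl⟩
  · exact ⟨_, ⟨_, ⟨_, ⟨i, rfl⟩, [], ⟨1, 0, by simp [blk]⟩, rfl⟩, [], Or.inl rfl, rfl⟩, [],
      ⟨0, rfl⟩, by simp⟩
  · obtain ⟨m, s, h1, h2, h3, h4, h5⟩ := exists_center k r hk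
    obtain ⟨t, rfl⟩ := Nat.exists_eq_add_of_le h1
    obtain ⟨t', ht'⟩ := Nat.exists_eq_add_of_le h2
    obtain rfl : r = t + t' := by omega
    refine ⟨_, ⟨_, ⟨_, ⟨i, rfl⟩, blk k t, ⟨k, t, hk, ?_, rfl⟩, rfl⟩, blk (k + t) t' ++ [false],
      Or.inr ⟨k + t, t', by omega, ?_, rfl⟩, rfl⟩, _, ⟨j, rfl⟩, ?_⟩
    · exact (Nat.pow_dvd_pow 2 (Nat.size_le.2 (by omega))).trans h3
    · exact (Nat.pow_dvd_pow 2 (Nat.size_le.2 (by omega))).trans h3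
    · rw [blk_add]; simp

/-! ### Splitting languages of linear accumulative complexity -/

/-- A well-order on words compatible with the length. -/
def wkey (w : List Bool) : ℕ ×ₗ ℕ := toLex (w.length, Encodable.encode w)

lemma wkey_inj {v w : List Bool} (h : wkey v = wkey w) : v = w := by
  have := congrArg (fun p => (ofLex p).2) h
  simpa [wkey] using this

lemma wkey_length {v w : List Bool} (h : wkey v < wkey w) : v.length ≤ w.length := by
  rw [wkey, wkey, Prod.Lex.toLex_lt_toLex] at h
  rcases h with h | h
  · exact h.le
  · exact h.1.le

lemma exists_cut (S : Set (List Bool)) (C : ℕ) (hS : ∀ n, accComplexity S n ≤ C * (n + 1)) :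
    ∃ c : List Bool → ℕ, ∀ w ∈ S, c w ≤ w.length ∧
      (((accFin S w.length).filter fun v => wkey v < wkey w ∧ c v = c w).card ≤ 2 * C) ∧
      (((accFin S w.length).filter fun v => wkey v < wkey w ∧
        v.length - c v = w.length - c w).card ≤ 2 * C) := by
  classical
  have wf : WellFounded (fun v w : List Bool => wkey v < wkey w) :=
    InvImage.wf wkey wellFounded_lt
  -- one step of the greedy choice
  have step : ∀ (w : List Bool) (g : List Bool → ℕ), ∃ i, i ≤ w.length ∧
      (((accFin S w.length).filter fun v => wkey v < wkey w ∧ g v = i).card ≤ 2 * C) ∧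
      (((accFin S w.length).filter fun v => wkey v < wkey w ∧
        v.length - g v = w.length - i).card ≤ 2 * C) := by
    intro w g
    by_contra hcon
    push Not at hcon
    set n := w.length with hn
    set F := (accFin S n).filter fun v => wkey v < wkey w with hF
    have hFc : F.card ≤ C * (n + 1) :=
      (Finset.card_filter_le _ _).trans ((card_accFin S n).le.trans (hS n))
    have h1 : ∑ i ∈ Finset.range (n + 1), (F.filter fun v => g v = i).card ≤ F.card := by
      rw [← Finset.card_biUnion]
      · apply Finset.card_le_card
        intro v hv
        simp only [Finset.mem_biUnion, Finset.mem_filter] at hv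
        obtain ⟨_, _, h, _⟩ := hv
        exact h
      · intro i _ j _ hij
        rw [Function.onFun, Finset.disjoint_left]
        intro v hv hv'
        simp only [Finset.mem_filter] at hv hv'
        exact hij (hv.2.symm.trans hv'.2)
    have h2 : ∑ i ∈ Finset.range (n + 1), (F.filter fun v => v.length - g v = n - i).card
        ≤ F.card := by
      rw [← Finset.card_biUnion]
      · apply Finset.card_le_card
        intro v hv
        simp only [Finset.mem_biUnion, Finset.mem_filter] at hv
        obtain ⟨_, _, h, _⟩ := hv
        exact h
      · intro i hi j hj hij
        rw [Function.onFun, Finset.disjoint_left]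
        intro v hv hv'
        simp only [Finset.mem_filter] at hv hv'
        simp only [Finset.coe_range, Set.mem_Iio] at hi hj
        omega
    have h3 : ∑ i ∈ Finset.range (n + 1), (2 * C + 1) ≤
        ∑ i ∈ Finset.range (n + 1), ((F.filter fun v => g v = i).card +
          (F.filter fun v => v.length - g v = n - i).card) := by
      apply Finset.sum_le_sum
      intro i hi
      have hi' : i ≤ n := by simpa [Nat.lt_succ_iff] using hi
      rw [hF, Finset.filter_filter, Finset.filter_filter]
      by_cases hc : ((accFin S n).filter fun v => wkey v < wkey w ∧ g v = i).card ≤ 2 * C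
      · have := hcon i hi' hc
        omega
      · omega
    rw [Finset.sum_const, Finset.card_range, smul_eq_mul, Finset.sum_add_distrib] at h3
    nlinarith
  choose ch hch using step
  let c : List Bool → ℕ := wf.fix fun w ih =>
    ch w fun v => if h : wkey v < wkey w then ih v h else 0
  have hc : ∀ w, c w = ch w fun v => if wkey v < wkey w then c v else 0 := by
    intro w
    have := wf.fix_eq (C := fun _ => ℕ) (fun w ih =>
      ch w fun v => if h : wkey v < wkey w then ih v h else 0) w
    simpa [c] using this
  refine ⟨c, fun w _ => ?_⟩
  obtain ⟨h1, h2, h3⟩ := hch w fun v => if wkey v < wkey w then c v else 0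
  rw [← hc] at h1 h2 h3
  refine ⟨h1, ?_, ?_⟩
  · convert h2 using 2
    apply Finset.filter_congr
    intro v _
    by_cases h : wkey v < wkey w <;> simp [h]
  · convert h3 using 2
    apply Finset.filter_congr
    intro v _
    by_cases h : wkey v < wkey w <;> simp [h]

lemma fiber_bound (S : Set (List Bool)) (D : ℕ) (P : List Bool → ℕ) (i : ℕ)
    (h : ∀ w ∈ S, ((accFin S w.length).filter fun v => wkey v < wkey w ∧ P v = P w).card ≤ D)
    (F : Finset (List Bool)) (hF : ∀ w ∈ F, w ∈ S ∧ P w = i) : F.card ≤ D + 1 := by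
  classical
  rcases F.eq_empty_or_nonempty with rfl | hne
  · simp
  obtain ⟨w, hw, hmax⟩ := F.exists_max_image wkey hne
  rw [← Finset.card_erase_add_one hw]
  have := h w (hF w hw).1
  refine Nat.add_le_add_right (le_trans (Finset.card_le_card ?_) this) 1
  intro v hv
  rw [Finset.mem_erase] at hv
  have hlt : wkey v < wkey w := lt_of_le_of_ne (hmax v hv.2) fun h => hv.1 (wkey_inj h)
  rw [Finset.mem_filter, mem_accFin]
  exact ⟨⟨(hF v hv.2).1, wkey_length hlt⟩, hlt, (hF v hv.2).2.trans (hF w hw).2.symm⟩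

lemma image_bound (S T : Set (List Bool)) (D : ℕ) (P : List Bool → ℕ)
    (f : List Bool → List Bool) (hT : ∀ u ∈ T, ∃ w ∈ S, f w = u ∧ P w = u.length)
    (h : ∀ w ∈ S, ((accFin S w.length).filter fun v => wkey v < wkey w ∧ P v = P w).card ≤ D)
    (n : ℕ) : complexity T n ≤ D + 1 := by
  classical
  unfold complexity
  rw [Set.ncard_eq_toFinset_card _ (complexity_finite T n)]
  set G := (complexity_finite T n).toFinset with hG
  have : ∀ u : G, ∃ w ∈ S, f w = u ∧ P w = n := by
    rintro ⟨u, hu⟩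
    rw [hG, Set.Finite.mem_toFinset] at hu
    obtain ⟨w, h1, h2, h3⟩ := hT u hu.1
    exact ⟨w, h1, h2, h3.trans hu.2⟩
  choose g hg1 hg2 hg3 using this
  have hinj : Function.Injective g := by
    intro a b hab
    apply Subtype.ext
    rw [← hg2 a, ← hg2 b, hab]
  have hcard : (Finset.univ.image g).card = G.card := by
    rw [Finset.card_image_of_injective _ hinj]; simp
  rw [← hcard]
  refine fiber_bound S D P n h _ ?_
  intro w hw
  simp only [Finset.mem_image, Finset.mem_univ, true_and] at hw
  obtain ⟨u, rfl⟩ := hw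
  exact ⟨hg1 u, hg3 u⟩

lemma split_two (S : Set (List Bool)) (C : ℕ) (hS : ∀ n, accComplexity S n ≤ C * (n + 1)) :
    ∃ T₁ T₂ : Set (List Bool), (∀ n, complexity T₁ n ≤ 2 * C + 1) ∧
      (∀ n, complexity T₂ n ≤ 2 * C + 1) ∧ S ⊆ prodL T₁ T₂ := by
  obtain ⟨c, hc⟩ := exists_cut S C hS
  refine ⟨{u | ∃ w ∈ S, w.take (c w) = u}, {u | ∃ w ∈ S, w.drop (c w) = u}, ?_, ?_, ?_⟩
  · refine image_bound S _ _ c (fun w => w.take (c w)) ?_ fun w hw => (hc w hw).2.1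
    rintro u ⟨w, hw, rfl⟩
    exact ⟨w, hw, rfl, by have := (hc w hw).1; simp; omega⟩
  · refine image_bound S _ _ (fun w => w.length - c w) (fun w => w.drop (c w)) ?_
      fun w hw => (hc w hw).2.2
    rintro u ⟨w, hw, rfl⟩
    exact ⟨w, hw, rfl, by simp⟩
  · intro w hw
    exact ⟨_, ⟨w, hw, rfl⟩, _, ⟨w, hw, rfl⟩, (List.take_append_drop _ _).symm⟩

/-! ### The lower bound -/

/-- number of letters `b` at the beginning. -/
def wstart (s : List Bool) : ℕ := (s.takeWhile id).length

/-- number of letters `b` between the first two letters `a`. -/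
def wgap (s : List Bool) : ℕ := ((s.dropWhile id).tail.takeWhile id).length

lemma wstart_eq (i : ℕ) (R : List Bool) : wstart (List.replicate i true ++ false :: R) = i := by
  induction i with
  | zero => simp [wstart]
  | succ i ih => simpa [wstart, List.replicate_succ, List.takeWhile_cons] using ih

lemma wdrop_eq (i : ℕ) (R : List Bool) :
    (List.replicate i true ++ false :: R).dropWhile id = false :: R := by
  induction i with
  | zero => simp
  | succ i ih => simpa [List.replicate_succ, List.dropWhile_cons] using ih

lemma wgap_eq (i k : ℕ) (R : List Bool) :
    wgap (List.replicate i true ++ false :: (List.replicate k true ++ false :: R)) = k := by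
  rw [wgap, wdrop_eq, List.tail_cons]
  exact wstart_eq k R

lemma cut_lemma (i : ℕ) (s t R : List Bool) (h : s ++ t = List.replicate i true ++ false :: R) :
    (∃ x ≤ i, s = List.replicate x true ∧ t = List.replicate (i - x) true ++ false :: R) ∨
    (∃ s', s = List.replicate i true ++ false :: s' ∧ s' ++ t = R) := by
  induction i generalizing s with
  | zero =>
    cases s with
    | nil => left; exact ⟨0, le_rfl, by simp, by simpa using h⟩
    | cons y s =>
      simp only [List.cons_append, List.replicate_zero, List.nil_append, List.cons.injEq] at h
      right; exact ⟨s, by simp [h.1], h.2⟩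
  | succ i ih =>
    cases s with
    | nil => left; exact ⟨0, by omega, by simp, by simpa using h⟩
    | cons y s =>
      simp only [List.cons_append, List.replicate_succ, List.cons.injEq] at h
      rcases ih s h.2 with ⟨x, hx, h1, h2⟩ | ⟨s', h1, h2⟩
      · left
        refine ⟨x + 1, by omega, by simp [List.replicate_succ, h.1, h1], ?_⟩
        rw [h2]; congr 2; omega
      · right
        exact ⟨s', by simp [List.replicate_succ, h.1, h1], h2⟩

lemma cut_gap (i k : ℕ) (s t R : List Bool) (hs : 2 ≤ s.count false)
    (h : s ++ t = List.replicate i true ++ false :: (List.replicate k true ++ false :: R)) :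
    wstart s = i ∧ wgap s = k := by
  rcases cut_lemma _ _ _ _ h with ⟨x, _, rfl, _⟩ | ⟨s', rfl, h2⟩
  · simp [List.count_replicate] at hs
  · rcases cut_lemma _ _ _ _ h2 with ⟨x, _, rfl, _⟩ | ⟨s'', rfl, h2⟩
    · simp [List.count_replicate] at hs
    · exact ⟨wstart_eq _ _, wgap_eq _ _ _⟩

lemma cut_three (i k r j : ℕ) (s₁ s₂ s₃ : List Bool) (hr : 3 ≤ r)
    (h : s₁ ++ s₂ ++ s₃ =
      List.replicate i true ++ (blk k r ++ false :: List.replicate j true)) :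
    (wstart s₁ = i ∧ wgap s₁ = k) ∨
    (wstart s₃.reverse = j ∧ wgap s₃.reverse = k + r - 1) ∨
    ((r - 1 ≤ s₂.count false ∧ s₂.count false ≤ r + 1) ∧ (wgap s₂ = k ∨ wgap s₂ = k + 1)) := by
  obtain ⟨r, rfl⟩ := Nat.exists_eq_add_of_le' hr
  have hcount := congrArg (List.count false) h
  simp [List.count_replicate, blk_count] at hcount
  -- the word from the left
  obtain ⟨R, hR⟩ : ∃ R, blk (k + 2) (r + 1) ++ false :: List.replicate j true = false :: R :=
    ⟨_, rfl⟩
  have hW : s₁ ++ s₂ ++ s₃ = List.replicate i true ++ false :: (List.replicate k true ++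
      false :: (List.replicate (k + 1) true ++ false :: R)) := by
    rw [h, ← hR]
    simp [blk]
  by_cases h1 : 2 ≤ s₁.count false
  · left
    rw [List.append_assoc] at hW
    exact cut_gap _ _ _ _ _ h1 hW
  by_cases h3 : 2 ≤ s₃.count false
  · right; left
    obtain ⟨R', hR'⟩ : ∃ R', (List.replicate i true ++ blk k (r + 2)).reverse = R' := ⟨_, rfl⟩
    have h' := congrArg List.reverse h
    rw [show r + 3 = (r + 2) + 1 by omega, blk_succ'] at h'
    refine cut_gap _ _ s₃.reverse (s₁ ++ s₂).reverse R' (by simpa using h3) ?_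
    rw [← List.reverse_append, h', ← hR']
    simp
  right; right
  refine ⟨by omega, ?_⟩
  have h2 : 2 ≤ s₂.count false := by omega
  rw [List.append_assoc] at hW
  rcases cut_lemma _ _ _ _ hW with ⟨x, _, _, h4⟩ | ⟨s', rfl, h4⟩
  · left
    exact (cut_gap _ _ _ _ _ h2 h4).2
  · rcases cut_lemma _ _ _ _ h4 with ⟨x, _, _, h5⟩ | ⟨s'', rfl, h5⟩
    · right
      exact (cut_gap _ _ _ _ _ h2 h5).2
    · simp [List.count_replicate] at h1

lemma prodL_mono {S S' T T' : Set (List Bool)} (h : S ⊆ S') (h' : T ⊆ T') :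
    prodL S T ⊆ prodL S' T' := by
  rintro w ⟨s, hs, t, ht, rfl⟩
  exact ⟨s, h hs, t, h' ht, rfl⟩

lemma powL_mono {S S' : Set (List Bool)} (h : S ⊆ S') (k : ℕ) : powL S k ⊆ powL S' k := by
  induction k with
  | zero => exact subset_rfl
  | succ k ih => exact prodL_mono ih h

lemma powL_succ_subset {S : Set (List Bool)} (h : [] ∈ S) {k l : ℕ} (hkl : k ≤ l) :
    powL S k ⊆ powL S l := by
  induction hkl with
  | refl => exact subset_rfl
  | step _ ih =>
    intro w hw
    exact ⟨w, ih hw, [], h, by simp⟩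

lemma trichotomy (S : Set (List Bool)) (h : Fac uWord ⊆ powL S 3) (q κ L : ℕ) (hq : 1 ≤ q)
    (hκ : 1 ≤ κ) (hL : 4 * κ + 1 + 3 * q * (2 * κ + 3 * q) ≤ L) :
    (∀ i < κ, ∃ s ∈ accFin S L, wstart s = i ∧ wgap s = 2 * κ) ∨
    (∀ j < κ, ∃ s ∈ accFin S L, wstart s.reverse = j ∧ wgap s.reverse = 2 * κ + 3 * q - 1) ∨
    (∃ s ∈ accFin S L, (s.count false + 1) / 3 = q ∧ wgap s / 2 = κ) := by
  by_contra hcon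
  push Not at hcon
  obtain ⟨⟨i, hi, hA⟩, ⟨j, hj, hB⟩, hG⟩ := hcon
  have hmem := h (word_mem_fac i (2 * κ) (3 * q) j (by omega) (by omega) (by omega))
  obtain ⟨_, ⟨_, ⟨_, hs0, s₁, hs1, rfl⟩, s₂, hs2, rfl⟩, s₃, hs3, hw⟩ := hmem
  have hs0 := Set.mem_singleton_iff.1 hs0
  subst hs0
  rw [List.nil_append] at hw
  have hlen := congrArg List.length hw
  simp only [List.length_append, List.length_replicate, List.length_cons] at hlen
  have hbl := blk_length (2 * κ) (3 * q)
  have hbl' : (blk (2 * κ) (3 * q)).length ≤ 3 * q * (2 * κ + 3 * q) := by nlinarith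
  have hlt : s₁.length + s₂.length + s₃.length ≤ L := by omega
  rcases cut_three i (2 * κ) (3 * q) j s₁ s₂ s₃ (by omega) hw.symm with h1 | h1 | ⟨h1, h2⟩
  · exact hA s₁ (mem_accFin.2 ⟨hs1, by omega⟩) h1.1 h1.2
  · exact hB s₃ (mem_accFin.2 ⟨hs3, by omega⟩) h1.1 h1.2
  · exact hG s₂ (mem_accFin.2 ⟨hs2, by omega⟩) (by omega) (by omega)

lemma bad_count (F : Finset (List Bool)) (K : Finset ℕ) (T : ℕ)
    (hT : ∀ κ ∈ K, T ≤ κ) (f g : List Bool → ℕ)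
    (hK : ∀ κ ∈ K, ∀ i < κ, ∃ s ∈ F, f s = i ∧ g s = κ) : K.card * T ≤ F.card := by
  classical
  rw [← Finset.card_range T, ← Finset.card_product]
  refine le_trans (Finset.card_le_card (t := F.image fun s => (g s, f s)) ?_)
    Finset.card_image_le
  rintro ⟨κ, i⟩ hp
  rw [Finset.mem_product, Finset.mem_range] at hp
  obtain ⟨s, hs, h1, h2⟩ := hK κ hp.1 i (lt_of_lt_of_le hp.2 (hT κ hp.1))
  rw [Finset.mem_image]
  exact ⟨s, hs, by rw [h1, h2]⟩

lemma harmonic_large (B : ℝ) : ∃ Q : ℕ, B < ∑ q ∈ Finset.Icc 1 Q, (1 : ℝ) / q := by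
  obtain ⟨Q, hQ⟩ := (Real.tendsto_sum_range_one_div_nat_succ_atTop.eventually_gt_atTop B).exists
  refine ⟨Q, ?_⟩
  have : ∑ q ∈ Finset.Icc 1 Q, (1 : ℝ) / q = ∑ i ∈ Finset.range Q, (1 : ℝ) / ((i : ℝ) + 1) := by
    clear hQ
    induction Q with
    | zero => simp
    | succ Q ih =>
      rw [Finset.sum_Icc_succ_top (by omega), ih, Finset.sum_range_succ]
      push_cast; rfl
  rw [this]
  exact hQ

lemma lower_bound (S : Set (List Bool)) (C : ℕ) (hC : 1 ≤ C)
    (hS : ∀ n, 1 ≤ n → accComplexity S n ≤ C * n) (h : Fac uWord ⊆ powL S 3) : False := by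
  classical
  obtain ⟨Q, hQ⟩ := harmonic_large (12 * C + 2)
  have hQ1 : 1 ≤ Q := by
    rcases Nat.eq_zero_or_pos Q with rfl | h
    · simp at hQ
      have : (0:ℝ) ≤ C := by positivity
      linarith
    · exact h
  set T := 24 * C * Q with hT
  have hT1 : 1 ≤ T := by rw [hT]; exact Nat.mul_pos (by omega) hQ1
  set N := Q * T + 9 * Q ^ 2 + 1 with hN
  set F := accFin S (12 * N) with hF
  have hFc : F.card ≤ C * (12 * N) := (card_accFin _ _).le.trans (hS _ (by omega))
  let PG : ℕ → ℕ → Prop := fun q κ => ∃ s ∈ F, (s.count false + 1) / 3 = q ∧ wgap s / 2 = κ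
  let G : ℕ → Finset ℕ := fun q => (Finset.Icc T (N / q)).filter (PG q)
  have hG : ∑ q ∈ Finset.Icc 1 Q, (G q).card ≤ F.card := by
    rw [← Finset.card_sigma]
    refine le_trans (Finset.card_le_card (t := F.image fun s =>
      (⟨(s.count false + 1) / 3, wgap s / 2⟩ : Σ _ : ℕ, ℕ)) ?_) Finset.card_image_le
    rintro ⟨q, κ⟩ hp
    rw [Finset.mem_sigma] at hp
    obtain ⟨s, hs, h1, h2⟩ := (Finset.mem_filter.1 hp.2).2
    rw [Finset.mem_image]
    exact ⟨s, hs, by simp only [h1, h2]⟩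
  have hq : ∀ q ∈ Finset.Icc 1 Q, (N : ℝ) * (1 / q) - T - N / Q ≤ (G q).card := by
    intro q hq
    rw [Finset.mem_Icc] at hq
    let PA : ℕ → Prop := fun κ => ∀ i < κ, ∃ s ∈ F, wstart s = i ∧ wgap s = 2 * κ
    let PB : ℕ → Prop := fun κ => ∀ j < κ, ∃ s ∈ F, wstart s.reverse = j ∧
      wgap s.reverse = 2 * κ + 3 * q - 1
    set K := Finset.Icc T (N / q) with hK
    have hA : (K.filter PA).card * T ≤ F.card := by
      refine bad_count F _ T (fun κ hκ => ?_) wstart (fun s => wgap s / 2) fun κ hκ i hi => ?_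
      · exact (Finset.mem_Icc.1 (Finset.mem_filter.1 hκ).1).1
      · obtain ⟨s, hs, h1, h2⟩ := (Finset.mem_filter.1 hκ).2 i hi
        exact ⟨s, hs, h1, by simp only [h2]; omega⟩
    have hB : (K.filter PB).card * T ≤ F.card := by
      refine bad_count F _ T (fun κ hκ => ?_) (fun s => wstart s.reverse)
        (fun s => (wgap s.reverse + 1 - 3 * q) / 2) fun κ hκ i hi => ?_
      · exact (Finset.mem_Icc.1 (Finset.mem_filter.1 hκ).1).1
      · obtain ⟨s, hs, h1, h2⟩ := (Finset.mem_filter.1 hκ).2 i hi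
        exact ⟨s, hs, h1, by simp only [h2]; omega⟩
    have hcov : K ⊆ K.filter PA ∪ K.filter PB ∪ G q := by
      intro κ hκ
      have hκ' := Finset.mem_Icc.1 hκ
      have hκN : κ * q ≤ N := (Nat.le_div_iff_mul_le (by omega)).1 hκ'.2
      have hκ1 : κ ≤ N := by nlinarith
      have hq2 : q ^ 2 ≤ Q ^ 2 := Nat.pow_le_pow_left hq.2 2
      have hL : 4 * κ + 1 + 3 * q * (2 * κ + 3 * q) ≤ 12 * N := by nlinarith
      simp only [Finset.mem_union]
      rcases trichotomy S h q κ (12 * N) hq.1 (by omega) hL with h1 | h1 | h1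
      · exact Or.inl (Or.inl (Finset.mem_filter.2 ⟨hκ, h1⟩))
      · exact Or.inl (Or.inr (Finset.mem_filter.2 ⟨hκ, h1⟩))
      · exact Or.inr (Finset.mem_filter.2 ⟨hκ, h1⟩)
    have hcard : K.card ≤ (K.filter PA).card + (K.filter PB).card + (G q).card :=
      (Finset.card_le_card hcov).trans ((Finset.card_union_le _ _).trans
        (Nat.add_le_add_right (Finset.card_union_le _ _) _))
    have hKc : (N : ℝ) * (1 / q) - T ≤ K.card := by
      have h1 : N / q + 1 ≤ K.card + T := by rw [hK, Nat.card_Icc]; omega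
      have h2 : (N : ℝ) / q < (N / q : ℕ) + 1 := by
        rw [div_lt_iff₀ (by exact_mod_cast hq.1)]
        exact_mod_cast Nat.lt_mul_of_div_lt (Nat.lt_succ_self (N / q)) (by omega)
      have h1' : ((N / q : ℕ) : ℝ) + 1 ≤ K.card + T := by exact_mod_cast h1
      have h3 : (N : ℝ) * (1 / q) = N / q := by ring
      linarith
    have hbad : (((K.filter PA).card + (K.filter PB).card : ℕ) : ℝ) ≤ N / Q := by
      rw [le_div_iff₀ (by exact_mod_cast hQ1)]
      have h1 : ((K.filter PA).card + (K.filter PB).card) * T ≤ 24 * C * N := by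
        rw [add_mul]; linarith
      rw [hT] at h1
      have h2 : (24 * C) * (((K.filter PA).card + (K.filter PB).card) * Q) ≤ (24 * C) * N := by
        calc _ = _ := by ring
          _ ≤ _ := h1
      exact_mod_cast Nat.le_of_mul_le_mul_left h2 (by omega)
    have hcard' : (K.card : ℝ) ≤ (((K.filter PA).card + (K.filter PB).card : ℕ) : ℝ) +
      (G q).card := by exact_mod_cast hcard
    linarith
  have hsum := Finset.sum_le_sum hq
  rw [Finset.sum_sub_distrib, Finset.sum_sub_distrib, ← Finset.mul_sum, Finset.sum_const,
    Finset.sum_const, Nat.card_Icc, Nat.add_sub_cancel, nsmul_eq_mul, nsmul_eq_mul] at hsum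
  have hQ0 : (Q : ℝ) ≠ 0 := by positivity
  rw [mul_div_cancel₀ _ hQ0] at hsum
  have h1 : (∑ q ∈ Finset.Icc 1 Q, ((G q).card : ℝ)) ≤ C * (12 * N) := by
    exact_mod_cast hG.trans hFc
  have h2 : (Q : ℝ) * T ≤ N := by
    have : Q * T ≤ N := by rw [hN]; omega
    exact_mod_cast this
  have h3 : (0 : ℝ) < N := by rw [hN]; positivity
  nlinarith

/-! ### Assembling -/

lemma polyBound_of_le {f : ℕ → ℕ} (C : ℕ) (h : ∀ n, 1 ≤ n → f n ≤ C * n) : PolyBound f 1 := by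
  refine ⟨C, fun n hn => ?_⟩
  rw [Real.rpow_one]
  exact_mod_cast h n hn

lemma le_of_polyBound {f : ℕ → ℕ} (h : PolyBound f 1) : ∃ C : ℕ, 1 ≤ C ∧
    ∀ n, 1 ≤ n → f n ≤ C * n := by
  obtain ⟨C, hC⟩ := h
  refine ⟨⌈C⌉₊ + 1, by omega, fun n hn => ?_⟩
  have h1 := hC n hn
  rw [Real.rpow_one] at h1
  have h2 := Nat.le_ceil C
  have h3 : (0:ℝ) ≤ n := by positivity
  have : (f n : ℝ) ≤ ((⌈C⌉₊ + 1 : ℕ) : ℝ) * n := by push_cast; nlinarith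
  exact_mod_cast this

lemma acc_le_of_complexity {S : Set (List Bool)} {D : ℕ} (h : ∀ n, complexity S n ≤ D) (n : ℕ) :
    accComplexity S n ≤ D * (n + 1) := by
  unfold accComplexity
  refine (Finset.sum_le_sum fun i _ => h i).trans ?_
  simp [mul_comm]

lemma complexity_singleton (n : ℕ) : accComplexity ({[]} : Set (List Bool)) n ≤ 1 := by
  classical
  rw [← card_accFin, Finset.card_le_one]
  intro a ha b hb
  rw [mem_accFin] at ha hb
  rw [Set.mem_singleton_iff.1 ha.1, Set.mem_singleton_iff.1 hb.1]

lemma starDim_le : polyDimStar 1 (Fac uWord) ≤ 4 := by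
  apply sInf_le
  refine ⟨4, rfl, by omega, Bs ∪ M2 ∪ M3, polyBound_of_le 14 fun n hn => ?_, ?_⟩
  · have h1 := accComplexity_union (Bs ∪ M2) M3 n
    have h2 := accComplexity_union Bs M2 n
    have h3 := acc_le_of_complexity Bs_complexity n
    have h4 := M2_acc n
    have h5 := M3_acc n
    omega
  · have hB : Bs ⊆ Bs ∪ M2 ∪ M3 := fun w h => Or.inl (Or.inl h)
    have h2 : M2 ⊆ Bs ∪ M2 ∪ M3 := fun w h => Or.inl (Or.inr h)
    have h3 : M3 ⊆ Bs ∪ M2 ∪ M3 := fun w h => Or.inr h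
    refine decomposition.trans (prodL_mono (prodL_mono (prodL_mono ?_ h2) h3) hB)
    intro w hw
    exact ⟨[], rfl, w, hB hw, rfl⟩

lemma le_starDim : 4 ≤ polyDimStar 1 (Fac uWord) := by
  apply le_sInf
  rintro _ ⟨m, rfl, hm, S, hS, hsub⟩
  by_contra hlt
  have hm3 : m ≤ 3 := by
    have : m < 4 := by exact_mod_cast not_le.1 hlt
    omega
  obtain ⟨C, hC1, hC⟩ := le_of_polyBound hS
  refine lower_bound (S ∪ {[]}) (C + 1) (by omega) (fun n hn => ?_)
    (hsub.trans ((powL_mono Set.subset_union_left m).trans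
      (powL_succ_subset (Or.inr rfl) hm3)))
  have h1 := accComplexity_union S {[]} n
  have h2 := complexity_singleton n
  have h3 := hC n hn
  nlinarith

lemma dim_le : polyDim 0 (Fac uWord) ≤ 6 := by
  obtain ⟨T₁, T₂, h1, h2, h12⟩ := split_two M2 4 fun n => (M2_acc n).trans (by omega)
  obtain ⟨T₃, T₄, h3, h4, h34⟩ := split_two M3 4 fun n => (M3_acc n).trans (by omega)
  apply sInf_le
  set U := Bs ∪ T₁ ∪ T₂ ∪ T₃ ∪ T₄ with hU
  refine ⟨6, rfl, by omega, U, ⟨37, fun n _ => ?_⟩, ?_⟩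
  · rw [Real.rpow_zero, mul_one]
    have a1 := complexity_union (Bs ∪ T₁ ∪ T₂ ∪ T₃) T₄ n
    have a2 := complexity_union (Bs ∪ T₁ ∪ T₂) T₃ n
    have a3 := complexity_union (Bs ∪ T₁) T₂ n
    have a4 := complexity_union Bs T₁ n
    have a5 := Bs_complexity n
    have := h1 n
    have := h2 n
    have := h3 n
    have := h4 n
    have : complexity U n ≤ 37 := by rw [hU]; omega
    exact_mod_cast this
  · intro w hw
    obtain ⟨_, ⟨_, ⟨x, hx, y, hy, rfl⟩, z, hz, rfl⟩, t, ht, rfl⟩ := decomposition hw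
    obtain ⟨y1, hy1, y2, hy2, rfl⟩ := h12 hy
    obtain ⟨z1, hz1, z2, hz2, rfl⟩ := h34 hz
    refine ⟨_, ⟨_, ⟨_, ⟨_, ⟨_, ⟨[], rfl, x, ?_, rfl⟩, y1, ?_, rfl⟩, y2, ?_, rfl⟩, z1, ?_, rfl⟩,
      z2, ?_, rfl⟩, t, ?_, by simp⟩ <;> simp only [hU, Set.mem_union] <;> tauto

/-- for `u = ∏ a b^i`, there are `S₁, S₂, S₃, S₄` with `S₁, S₄` of
bounded complexity, `S₂, S₃` of linear accumulative complexity and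
`Fac(u) ⊆ S₁ S₂ S₃ S₄`; consequently `d*₁(u) = 4` and `d₀(u) ≤ 6`. -/
theorem stmt17 :
    (∃ S₁ S₂ S₃ S₄ : Set (List Bool),
        (∃ C : ℕ, ∀ n : ℕ, complexity S₁ n ≤ C) ∧
        (∃ C : ℕ, ∀ n : ℕ, complexity S₄ n ≤ C) ∧
        PolyBound (accComplexity S₂) 1 ∧ PolyBound (accComplexity S₃) 1 ∧
        Fac uWord ⊆ prodL (prodL (prodL S₁ S₂) S₃) S₄) ∧
    polyDimStar 1 (Fac uWord) = 4 ∧ polyDim 0 (Fac uWord) ≤ 6 := by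
  exact ⟨⟨Bs, M2, M3, Bs, ⟨1, Bs_complexity⟩, ⟨1, Bs_complexity⟩,
    polyBound_of_le 6 fun n hn => (M2_acc n).trans (by omega),
    polyBound_of_le 6 fun n hn => (M3_acc n).trans (by omega), decomposition⟩,
    le_antisymm starDim_le le_starDim, dim_le⟩
end

section
/- Let f : ℕ⁺ → ℕ⁺ be a non-decreasing function satisfying f(1) = 1, f(n) ≤ n for all n, and f(n) → +∞. Then there exists a one-sided infinite word x ∈ {a,b}^ℕ with p_x(n) = O(n² f(n)) such that for every positive integer k and every language S ⊆ {a,b}* with Fac(x) ⊆ S^k, one has p*_S(n) = Ω(Σ_{p=1}^{⌊(n−2)/(2(2k−1))⌋} f(p)). Consequently d_0(x) = d*_1(x) = +∞. -/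
open scoped ENNReal Pointwise

universe u

variable {A : Type u}

/-- the periodic word `(a^q b^p)^ω` with `a = true`. -/
def perW (p q t : ℕ) : Bool := decide (t % (p + q) < q)

/-- state machine: `(p, q, r)` = position `r` inside the block `(a^q b^p)^p`. -/
def stp (f : ℕ → ℕ) (s : ℕ × ℕ × ℕ) : ℕ × ℕ × ℕ :=
  if s.2.2 + 1 < (s.1 + s.2.1) * s.1 then (s.1, s.2.1, s.2.2 + 1)
  else if s.2.1 < f s.1 then (s.1, s.2.1 + 1, 0) else (s.1 + 1, 1, 0)

def outS (s : ℕ × ℕ × ℕ) : Bool := perW s.1 s.2.1 s.2.2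

def xW (f : ℕ → ℕ) (n : ℕ) : Bool := outS ((stp f)^[n] (1, 1, 0))

def winW (f : ℕ → ℕ) (s : ℕ × ℕ × ℕ) (n : ℕ) : List Bool :=
  (List.range n).map fun j => outS ((stp f)^[j] s)

def InvS (f : ℕ → ℕ) (s : ℕ × ℕ × ℕ) : Prop :=
  1 ≤ s.1 ∧ 1 ≤ s.2.1 ∧ s.2.1 ≤ f s.1 ∧ s.2.2 < (s.1 + s.2.1) * s.1

lemma wordSeg_xW (f : ℕ → ℕ) (i n : ℕ) :
    wordSeg (xW f) i n = winW f ((stp f)^[i] (1, 1, 0)) n := by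
  unfold wordSeg winW xW
  apply List.map_congr_left
  intro j _
  rw [add_comm, Function.iterate_add_apply]

lemma stp_inv (f : ℕ → ℕ) (hf : ∀ n, 1 ≤ n → 1 ≤ f n) (s : ℕ × ℕ × ℕ) (h : InvS f s) :
    InvS f (stp f s) := by
  obtain ⟨p, q, r⟩ := s
  obtain ⟨h1, h2, h3, h4⟩ := h
  simp only at h1 h2 h3 h4
  unfold stp InvS
  simp only
  split_ifs with a b
  · exact ⟨h1, h2, h3, a⟩
  · exact ⟨h1, by simp, b, by simp only; positivity⟩
  · exact ⟨by simp, le_refl _, hf _ (by simp), by simp only; positivity⟩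

lemma iter_inv (f : ℕ → ℕ) (hf : ∀ n, 1 ≤ n → 1 ≤ f n) (s : ℕ × ℕ × ℕ) (h : InvS f s)
    (n : ℕ) : InvS f ((stp f)^[n] s) := by
  induction n with
  | zero => exact h
  | succ n ih => rw [Function.iterate_succ_apply']; exact stp_inv f hf _ ih

lemma iter_in (f : ℕ → ℕ) (p q r j : ℕ) (h : r + j < (p + q) * p) :
    (stp f)^[j] (p, q, r) = (p, q, r + j) := by
  induction j with
  | zero => rfl
  | succ j ih =>
    rw [Function.iterate_succ_apply', ih (by omega)]
    unfold stp
    simp only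
    rw [if_pos (by omega)]
    rfl

lemma iter_end (f : ℕ → ℕ) (p q r j : ℕ) (hj : 0 < j) (h : r + j = (p + q) * p) :
    (stp f)^[j] (p, q, r) = if q < f p then (p, q + 1, 0) else (p + 1, 1, 0) := by
  obtain ⟨j, rfl⟩ : ∃ i, j = i + 1 := ⟨j - 1, by omega⟩
  rw [Function.iterate_succ_apply', iter_in f p q r j (by omega)]
  unfold stp
  simp only
  rw [if_neg (by omega)]

lemma reach (f : ℕ → ℕ) (hf : ∀ n, 1 ≤ n → 1 ≤ f n) (hf1 : f 1 = 1) (p : ℕ) (hp : 1 ≤ p) :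
    ∀ q, 1 ≤ q → q ≤ f p → ∃ i, (stp f)^[i] (1, 1, 0) = (p, q, 0) := by
  induction p, hp using Nat.le_induction with
  | base =>
    intro q h1 h2
    have : q = 1 := by omega
    subst this
    exact ⟨0, rfl⟩
  | succ p hp ih =>
    intro q h1
    induction q, h1 using Nat.le_induction with
    | base =>
      intro _
      obtain ⟨i, hi⟩ := ih (f p) (hf p hp) le_rfl
      refine ⟨(p + f p) * p + i, ?_⟩
      rw [Function.iterate_add_apply, hi, iter_end f _ _ _ _ (by positivity) (by simp)]
      simp
    | succ q hq ihq =>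
      intro h
      obtain ⟨i, hi⟩ := ihq (by omega)
      refine ⟨((p + 1) + q) * (p + 1) + i, ?_⟩
      rw [Function.iterate_add_apply, hi, iter_end f _ _ _ _ (by positivity) (by simp)]
      rw [if_pos (by omega)]

lemma period_fit (p q r j : ℕ) (h : r < (p + q) * p)
    (hj : r % (p + q) + j ≤ p + q) : r + j ≤ (p + q) * p := by
  have h1 := Nat.div_add_mod r (p + q)
  have h2 : r / (p + q) < p := Nat.div_lt_of_lt_mul h
  have h3 : (p + q) * (r / (p + q) + 1) ≤ (p + q) * p := Nat.mul_le_mul_left _ h2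
  rw [mul_add] at h3
  omega

lemma add_mod_small (r j m : ℕ) (h : r % m + j < m) : (r + j) % m = r % m + j := by
  rw [Nat.add_mod, Nat.mod_eq_of_lt (show j < m by omega), Nat.mod_eq_of_lt h]

lemma out_early (f : ℕ → ℕ) (p q r j : ℕ) (h : InvS f (p, q, r))
    (hj : r % (p + q) + j < p + q) :
    outS ((stp f)^[j] (p, q, r)) = decide (r % (p + q) + j < q) := by
  obtain ⟨h1, h2, h3, h4⟩ := h
  simp only at h1 h2 h3 h4
  have := period_fit p q r (j + 1) h4 (by omega)
  rw [iter_in f p q r j (by omega)]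
  unfold outS perW
  simp only
  rw [add_mod_small _ _ _ hj]

lemma period_end (f : ℕ → ℕ) (p q r : ℕ) (h : InvS f (p, q, r)) :
    ∃ p' q' r', (stp f)^[p + q - r % (p + q)] (p, q, r) = (p', q', r') ∧ p ≤ p' ∧
      r' % (p' + q') = 0 := by
  obtain ⟨h1, h2, h3, h4⟩ := h
  simp only at h1 h2 h3 h4
  have hm : r % (p + q) < p + q := Nat.mod_lt _ (by omega)
  have := period_fit p q r (p + q - r % (p + q)) h4 (by omega)
  rcases this.lt_or_eq with h | h
  · refine ⟨p, q, _, iter_in f p q r _ h, le_rfl, ?_⟩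
    have h1 := Nat.div_add_mod r (p + q)
    have : r + (p + q - r % (p + q)) = (p + q) * (r / (p + q) + 1) := by
      rw [mul_add]; omega
    rw [this]; simp
  · rw [iter_end f p q r _ (by omega) h]
    split_ifs
    · exact ⟨_, _, _, rfl, le_rfl, by simp⟩
    · exact ⟨_, _, _, rfl, by omega, by simp⟩

lemma far_window (f : ℕ → ℕ) (hf : ∀ n, 1 ≤ n → 1 ≤ f n) (p q r n : ℕ) (h : InvS f (p, q, r))
    (hn : n ≤ p) : ∃ i < n + 1, ∃ e < n + 1, ∀ j < n,
      outS ((stp f)^[j] (p, q, r)) = decide (i ≤ j ∧ j < e) := by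
  have h2 : 1 ≤ q := h.2.1
  have hm : r % (p + q) < p + q := Nat.mod_lt _ (by omega)
  by_cases hc : r % (p + q) < q
  · refine ⟨0, by omega, min (q - r % (p + q)) n, by omega, fun j hj => ?_⟩
    rw [out_early f p q r j h (by omega), decide_eq_decide]
    omega
  · obtain ⟨p', q', r', h', hp', hr'⟩ := period_end f p q r h
    set D := p + q - r % (p + q) with hD
    have hI : InvS f (p', q', r') := by rw [← h']; exact iter_inv f hf _ h _
    refine ⟨min D n, by omega, min (D + q') n, by omega, fun j hj => ?_⟩
    by_cases hjD : j < D
    · rw [out_early f p q r j h (by omega), decide_eq_decide]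
      omega
    · have : j = (j - D) + D := by omega
      rw [this, Function.iterate_add_apply, h', out_early f p' q' r' _ hI (by omega),
        decide_eq_decide, hr']
      omega

lemma upper (f : ℕ → ℕ) (hf : ∀ n, 1 ≤ n → 1 ≤ f n) (hf1 : f 1 = 1)
    (hmono : ∀ m n : ℕ, 1 ≤ m → m ≤ n → f m ≤ f n)
    (hle : ∀ n : ℕ, 1 ≤ n → f n ≤ n) (n : ℕ) (hn : 1 ≤ n) :
    complexity (Fac (xW f)) n ≤ 10 * n ^ 2 * f n := by
  classical
  let F1 : Finset (List Bool) :=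
    (Finset.range n ×ˢ Finset.range (f n + 1) ×ˢ Finset.range n).image
      fun z => winW f (z.1, z.2.1, (z.1 + z.2.1) * z.1 - 1 - z.2.2) n
  let F2 : Finset (List Bool) :=
    (Finset.range n ×ˢ Finset.range (f n + 1) ×ˢ Finset.range (2 * n)).image
      fun z => (List.range n).map fun j => perW z.1 z.2.1 (z.2.2 + j)
  let F3 : Finset (List Bool) :=
    (Finset.range (n + 1) ×ˢ Finset.range (n + 1)).image
      fun z => (List.range n).map fun j => decide (z.1 ≤ j ∧ j < z.2)
  have c1 : F1.card ≤ n * ((f n + 1) * n) := by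
    refine Finset.card_image_le.trans ?_
    simp
  have c2 : F2.card ≤ n * ((f n + 1) * (2 * n)) := by
    refine Finset.card_image_le.trans ?_
    simp
  have c3 : F3.card ≤ (n + 1) * (n + 1) := by
    refine Finset.card_image_le.trans ?_
    simp
  have hsub : {u ∈ Fac (xW f) | u.length = n} ⊆ (↑(F1 ∪ F2 ∪ F3) : Set (List Bool)) := by
    rintro u ⟨⟨i, m, rfl⟩, hl⟩
    have hmn : m = n := by simpa [wordSeg] using hl
    subst hmn
    rw [wordSeg_xW]
    have hI : InvS f ((stp f)^[i] (1, 1, 0)) :=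
      iter_inv f hf _ (by simp [InvS, hf1]) i
    generalize (stp f)^[i] (1, 1, 0) = z at hI ⊢
    obtain ⟨p, q, r⟩ := z
    rw [Finset.mem_coe, Finset.mem_union, Finset.mem_union]
    by_cases hp : p < m
    · left
      have hI' := hI
      obtain ⟨h1, h2, h3, h4⟩ := hI'
      simp only at h1 h2 h3 h4
      have hq := hmono p m h1 hp.le
      have hq2 := hle p h1
      by_cases hr : r + m ≤ (p + q) * p
      · right
        refine Finset.mem_image.2 ⟨(p, q, r % (p + q)), ?_, ?_⟩
        · have hm : r % (p + q) < p + q := Nat.mod_lt _ (by omega)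
          simp only [Finset.mem_product, Finset.mem_range]
          omega
        · unfold winW
          apply List.map_congr_left
          intro j hj
          have hj := List.mem_range.1 hj
          rw [iter_in f p q r j (by omega)]
          simp [outS, perW]
      · left
        refine Finset.mem_image.2 ⟨(p, q, (p + q) * p - 1 - r), ?_, ?_⟩
        · simp only [Finset.mem_product, Finset.mem_range]
          omega
        · simp only
          congr 3
          omega
    · right
      obtain ⟨a, ha, e, he, H⟩ := far_window f hf p q r m hI (by omega)
      refine Finset.mem_image.2 ⟨(a, e), by simp [ha, he], ?_⟩
      unfold winW
      apply List.map_congr_left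
      intro j hj
      exact (H j (List.mem_range.1 hj)).symm
  have hc : complexity (Fac (xW f)) n ≤ (F1 ∪ F2 ∪ F3).card := by
    unfold complexity
    rw [← Set.ncard_coe_finset]
    exact Set.ncard_le_ncard hsub (Finset.finite_toSet _)
  have h4 := Finset.card_union_le (F1 ∪ F2) F3
  have h5 := Finset.card_union_le F1 F2
  have hfn := hf n hn
  have e1 : n * ((f n + 1) * n) ≤ 2 * (n ^ 2 * f n) := by
    have : n * ((f n + 1) * n) ≤ n * ((f n + f n) * n) := by gcongr
    nlinarith
  have e2 : n * ((f n + 1) * (2 * n)) ≤ 4 * (n ^ 2 * f n) := by nlinarith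
  have e3 : (n + 1) * (n + 1) ≤ 4 * (n ^ 2 * f n) := by
    have a1 : (n + 1) * (n + 1) ≤ (n + n) * (n + n) := by gcongr
    have a2 : n ^ 2 * 1 ≤ n ^ 2 * f n := by gcongr
    nlinarith
  have : 10 * n ^ 2 * f n = 2 * (n ^ 2 * f n) + 4 * (n ^ 2 * f n) + 4 * (n ^ 2 * f n) := by ring
  omega

lemma long_piece (S : Set (List Bool)) (k : ℕ) : ∀ w ∈ powL S (k + 1),
    ∃ u s v, w = u ++ s ++ v ∧ s ∈ S ∧ w.length ≤ (k + 1) * s.length := by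
  induction k with
  | zero =>
    rintro w ⟨t, ht, s, hs, rfl⟩
    have : t = [] := ht
    subst this
    exact ⟨[], s, [], by simp, hs, by simp⟩
  | succ k ih =>
    rintro w ⟨t, ht, s, hs, rfl⟩
    obtain ⟨u, s', v, h, hs', hl⟩ := ih t ht
    by_cases hc : s'.length ≤ s.length
    · refine ⟨t, s, [], by simp, hs, ?_⟩
      rw [List.length_append]
      nlinarith
    · refine ⟨u, s', v ++ s, by simp [h], hs', ?_⟩
      rw [List.length_append]
      nlinarith

lemma resid (c m r : ℕ) (h : r < m) : ∃ i < m, (c + i) % m = r := by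
  have hc : c % m < m := Nat.mod_lt _ (by omega)
  by_cases hr : c % m ≤ r
  · exact ⟨r - c % m, by omega, by rw [add_mod_small _ _ _ (by omega)]; omega⟩
  · refine ⟨m - c % m + r, by omega, ?_⟩
    have h1 := Nat.div_add_mod c m
    have : c + (m - c % m + r) = r + m * (c / m + 1) := by rw [mul_add]; omega
    rw [this, Nat.add_mul_mod_self_left, Nat.mod_eq_of_lt h]

lemma mod_succ_cases (t m : ℕ) (hm : 0 < m) :
    ((t + 1) % m = t % m + 1 ∧ t % m + 1 < m) ∨ ((t + 1) % m = 0 ∧ t % m + 1 = m) := by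
  have hc : t % m < m := Nat.mod_lt _ (by omega)
  by_cases h : t % m + 1 < m
  · exact Or.inl ⟨add_mod_small _ _ _ h, h⟩
  · refine Or.inr ⟨?_, by omega⟩
    have h1 := Nat.div_add_mod t m
    have : t + 1 = m * (t / m + 1) := by rw [mul_add]; omega
    rw [this]; simp

lemma trans_ab (p q t : ℕ) (hq : 0 < q) (h1 : perW p q t = true) (h2 : perW p q (t + 1) = false) :
    t % (p + q) = q - 1 := by
  unfold perW at *
  simp only [decide_eq_true_eq, decide_eq_false_iff_not] at h1 h2
  rcases mod_succ_cases t (p + q) (by omega) with h | h <;> omega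

lemma trans_ba (p q t : ℕ) (hq : 0 < q) (h1 : perW p q t = false) (h2 : perW p q (t + 1) = true) :
    t % (p + q) = p + q - 1 := by
  unfold perW at *
  simp only [decide_eq_true_eq, decide_eq_false_iff_not] at h1 h2
  rcases mod_succ_cases t (p + q) (by omega) with h | h <;> omega

lemma run_b (p q t j : ℕ) (hq : 0 < q) (h : t % (p + q) = q - 1) (hj : j < p) :
    perW p q (t + (j + 1)) = false := by
  unfold perW
  rw [add_mod_small _ _ _ (by omega)]
  simp only [decide_eq_false_iff_not]
  omega

lemma run_b_end (p q t : ℕ) (hq : 0 < q) (h : t % (p + q) = q - 1) :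
    perW p q (t + (p + 1)) = true := by
  unfold perW
  have h1 := Nat.div_add_mod t (p + q)
  have : t + (p + 1) = (p + q) * (t / (p + q) + 1) := by rw [mul_add]; omega
  rw [this]; simpa using hq

lemma run_a (p q t j : ℕ) (h : t % (p + q) = p + q - 1) (hj : j < q) :
    perW p q (t + (j + 1)) = true := by
  unfold perW
  have h1 := Nat.div_add_mod t (p + q)
  have : t + (j + 1) = j + (p + q) * (t / (p + q) + 1) := by rw [mul_add]; omega
  rw [this, Nat.add_mul_mod_self_left, Nat.mod_eq_of_lt (by omega)]
  simpa using hj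

lemma run_a_end (p q t : ℕ) (hp : 0 < p) (h : t % (p + q) = p + q - 1) :
    perW p q (t + (q + 1)) = false := by
  unfold perW
  have h1 := Nat.div_add_mod t (p + q)
  have : t + (q + 1) = q + (p + q) * (t / (p + q) + 1) := by rw [mul_add]; omega
  rw [this, Nat.add_mul_mod_self_left, Nat.mod_eq_of_lt (by omega)]
  simp

lemma perW_of_mod_q (p q t : ℕ) (hq : 0 < q) (h : t % (p + q) = q - 1) : perW p q t = true := by
  unfold perW
  simp only [decide_eq_true_eq]
  omega

lemma perW_of_mod_p (p q t : ℕ) (hp : 0 < p) (h : t % (p + q) = p + q - 1) :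
    perW p q t = false := by
  unfold perW
  simp only [decide_eq_false_iff_not]
  omega

/-- `s` is a factor of `(a^q b^p)^ω` containing full runs of both letters. -/
def GoodW (p q : ℕ) (s : List Bool) : Prop :=
  0 < p ∧ 0 < q ∧ ∃ c i i', (∀ j < s.length, s[j]? = some (perW p q (c + j))) ∧
    (c + i) % (p + q) = q - 1 ∧ i + p + 1 < s.length ∧
    (c + i') % (p + q) = p + q - 1 ∧ i' + q + 1 < s.length

lemma good_le (p q p' q' : ℕ) (s : List Bool) (h : GoodW p q s) (h' : GoodW p' q' s) :
    p' ≤ p ∧ q' ≤ q := by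
  obtain ⟨hp, hq, c, i, i', H, hi, hil, hi', hil'⟩ := h
  obtain ⟨hp', hq', c', -, -, H', -⟩ := h'
  have E : ∀ j < s.length, perW p q (c + j) = perW p' q' (c' + j) := by
    intro j hj
    have a := H j hj
    rw [H' j hj] at a
    exact (Option.some.inj a).symm
  constructor
  · by_contra hlt
    have a1 := E i (by omega)
    rw [perW_of_mod_q p q _ hq hi] at a1
    have a2 := E (i + 1) (by omega)
    have a3 := run_b p q (c + i) 0 hq hi hp
    rw [show c + (i + 1) = c + i + (0 + 1) by ring, a3] at a2
    have a4 := trans_ab p' q' (c' + i) hq' a1.symm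
      (by rw [show c' + i + 1 = c' + (i + 1) by ring]; exact a2.symm)
    have a5 := run_b p' q' (c' + i) p hq' a4 (by omega)
    have a6 := run_b_end p q (c + i) hq hi
    have a7 := E (i + (p + 1)) (by omega)
    rw [← add_assoc c, ← add_assoc c', a5, a6] at a7
    exact absurd a7 (by simp)
  · by_contra hlt
    have a1 := E i' (by omega)
    rw [perW_of_mod_p p q _ hp hi'] at a1
    have a2 := E (i' + 1) (by omega)
    have a3 := run_a p q (c + i') 0 hi' hq
    rw [show c + (i' + 1) = c + i' + (0 + 1) by ring, a3] at a2
    have a4 := trans_ba p' q' (c' + i') hq' a1.symm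
      (by rw [show c' + i' + 1 = c' + (i' + 1) by ring]; exact a2.symm)
    have a5 := run_a p' q' (c' + i') q a4 (by omega)
    have a6 := run_a_end p q (c + i') hp hi'
    have a7 := E (i' + (q + 1)) (by omega)
    rw [← add_assoc c, ← add_assoc c', a5, a6] at a7
    exact absurd a7 (by simp)

lemma exists_good (f : ℕ → ℕ) (hf : ∀ n, 1 ≤ n → 1 ≤ f n) (hf1 : f 1 = 1)
    (hle : ∀ n : ℕ, 1 ≤ n → f n ≤ n) (k : ℕ) (S : Set (List Bool))
    (hS : Fac (xW f) ⊆ powL S (k + 1)) (p q : ℕ) (hp : 4 * (k + 1) ≤ p) (hq : 1 ≤ q)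
    (hqf : q ≤ f p) :
    ∃ s ∈ S, GoodW p q s ∧ s.length ≤ (4 * k + 2) * p + 2 := by
  obtain ⟨i0, hi0⟩ := reach f hf hf1 p (by omega) q hq hqf
  have hqp := hle p (by omega)
  obtain ⟨u, s, v, hw, hs, hl⟩ := long_piece S k _
    (hS ⟨i0 + (p + q - 1), (4 * k + 2) * p + 2, rfl⟩)
  have hx : ∀ t, t < (p + q) * p → xW f (i0 + t) = perW p q t := by
    intro t ht
    unfold xW
    rw [add_comm, Function.iterate_add_apply, hi0, iter_in f p q 0 t (by omega)]
    simp [outS]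
  have hlen : (4 * k + 2) * p + 2 = u.length + s.length + v.length := by
    have := congrArg List.length hw
    simpa [wordSeg, add_assoc] using this
  have hfit : (p + q - 1) + ((4 * k + 2) * p + 2) ≤ (p + q) * p := by
    have : (p + q) * (4 * k + 4) ≤ (p + q) * p := by gcongr; omega
    nlinarith [Nat.sub_le (p + q) 1]
  rw [show (wordSeg (xW f) (i0 + (p + q - 1)) ((4 * k + 2) * p + 2)).length
    = (4 * k + 2) * p + 2 by simp [wordSeg]] at hl
  have H : ∀ j < s.length, s[j]? = some (perW p q ((p + q - 1 + u.length) + j)) := by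
    intro j hj
    have a : (u ++ s ++ v)[u.length + j]? = s[j]? := by
      rw [List.append_assoc, List.getElem?_append_right (by omega), Nat.add_sub_cancel_left,
        List.getElem?_append_left hj]
    rw [← a, ← hw]
    have hj' : u.length + j < (4 * k + 2) * p + 2 := by omega
    simp only [wordSeg, List.getElem?_map, List.getElem?_range hj', Option.map_some]
    rw [add_assoc i0, hx _ (by omega), add_assoc (p + q - 1)]
  refine ⟨s, hs, ⟨by omega, by omega, p + q - 1 + u.length, ?_⟩, by omega⟩
  rcases Nat.eq_zero_or_pos k with hk | hk
  · subst hk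
    have hu : u.length = 0 := by omega
    refine ⟨q, 0, H, ?_, by omega, ?_, by omega⟩
    · rw [hu, show p + q - 1 + 0 + q = (q - 1) + (p + q) * 1 by omega,
        Nat.add_mul_mod_self_left, Nat.mod_eq_of_lt (by omega)]
    · rw [hu]; exact Nat.mod_eq_of_lt (by omega)
  · have hsl : 3 * p + 1 ≤ s.length := by
      by_contra hcon
      have h1 : s.length ≤ 3 * p := by omega
      have h2 : (k + 1) * s.length ≤ (k + 1) * (3 * p) := by gcongr
      nlinarith
    obtain ⟨i, hi, hi2⟩ := resid (p + q - 1 + u.length) (p + q) (q - 1) (by omega)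
    obtain ⟨i', hi', hi2'⟩ := resid (p + q - 1 + u.length) (p + q) (p + q - 1) (by omega)
    exact ⟨i, i', H, hi2, by omega, hi2', by omega⟩

lemma acc_ge (S : Set (List Bool)) (n : ℕ) (T : Finset (List Bool))
    (hT : ∀ u ∈ T, u ∈ S ∧ u.length ≤ n) : T.card ≤ accComplexity S n := by
  classical
  rw [Finset.card_eq_sum_card_fiberwise (f := List.length) (t := Finset.range (n + 1))
    (by intro u hu; simpa [Nat.lt_succ_iff] using (hT u hu).2)]
  unfold accComplexity
  apply Finset.sum_le_sum
  intro i _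
  unfold complexity
  rw [← Set.ncard_coe_finset]
  apply Set.ncard_le_ncard
  · intro u hu
    simp only [Finset.coe_filter, Set.mem_ofPred_eq] at hu
    exact ⟨(hT u hu.1).1, hu.2⟩
  · exact (List.finite_length_eq Bool i).subset fun u hu => hu.2

lemma lower_nat (f : ℕ → ℕ) (hf : ∀ n, 1 ≤ n → 1 ≤ f n) (hf1 : f 1 = 1)
    (hle : ∀ n : ℕ, 1 ≤ n → f n ≤ n) (k : ℕ) (S : Set (List Bool))
    (hS : Fac (xW f) ⊆ powL S (k + 1)) (n P : ℕ) (hP : (4 * k + 2) * P + 2 ≤ n) :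
    ∑ p ∈ Finset.Icc (4 * (k + 1)) P, f p ≤ accComplexity S n := by
  classical
  let I : Finset (Σ _ : ℕ, ℕ) := (Finset.Icc (4 * (k + 1)) P).sigma fun p => Finset.Icc 1 (f p)
  have hI : I.card = ∑ p ∈ Finset.Icc (4 * (k + 1)) P, f p := by
    rw [Finset.card_sigma]; simp
  have hex : ∀ z ∈ I, ∃ s ∈ S, GoodW z.1 z.2 s ∧ s.length ≤ (4 * k + 2) * z.1 + 2 := by
    intro z hz
    simp only [I, Finset.mem_sigma, Finset.mem_Icc] at hz
    exact exists_good f hf hf1 hle k S hS z.1 z.2 hz.1.1 hz.2.1 hz.2.2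
  choose! g hg using hex
  have hinj : Set.InjOn g (I : Set (Σ _ : ℕ, ℕ)) := by
    rintro ⟨p, q⟩ hz ⟨p', q'⟩ hz' he
    have a := (hg _ hz).2.1
    have b := (hg _ hz').2.1
    rw [← he] at b
    have c := good_le _ _ _ _ _ a b
    have d := good_le _ _ _ _ _ b a
    simp only at c d
    obtain rfl : p = p' := by omega
    obtain rfl : q = q' := by omega
    rfl
  rw [← hI, ← Finset.card_image_of_injOn hinj]
  apply acc_ge
  intro u hu
  obtain ⟨z, hz, rfl⟩ := Finset.mem_image.1 hu
  refine ⟨(hg z hz).1, (hg z hz).2.2.trans ?_⟩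
  simp only [I, Finset.mem_sigma, Finset.mem_Icc] at hz
  have : (4 * k + 2) * z.1 ≤ (4 * k + 2) * P := by gcongr; exact hz.1.2
  omega

lemma lower (f : ℕ → ℕ) (hf : ∀ n, 1 ≤ n → 1 ≤ f n) (hf1 : f 1 = 1)
    (hmono : ∀ m n : ℕ, 1 ≤ m → m ≤ n → f m ≤ f n)
    (hle : ∀ n : ℕ, 1 ≤ n → f n ≤ n) (k : ℕ) (hk : 1 ≤ k) (S : Set (List Bool))
    (hS : Fac (xW f) ⊆ powL S k) :
    ∃ K : ℝ, 0 < K ∧ ∃ N : ℕ, ∀ n : ℕ, N ≤ n →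
      K * (∑ p ∈ Finset.Icc 1 ((n - 2) / (2 * (2 * k - 1))), (f p : ℝ)) ≤
        (accComplexity S n : ℝ) := by
  obtain ⟨k, rfl⟩ : ∃ i, k = i + 1 := ⟨k - 1, by omega⟩
  have hkk : 2 * (2 * (k + 1) - 1) = 4 * k + 2 := by omega
  rw [hkk]
  refine ⟨1 / (4 * (k + 1) + 1 : ℝ), by positivity, (4 * k + 2) * (4 * (k + 1)) + 2,
    fun n hn => ?_⟩
  set P := (n - 2) / (4 * k + 2) with hPdef
  have hP : (4 * k + 2) * P + 2 ≤ n := by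
    have := Nat.mul_div_le (n - 2) (4 * k + 2)
    rw [← hPdef] at this
    omega
  have hPk : 4 * (k + 1) ≤ P := by
    rw [hPdef, Nat.le_div_iff_mul_le (by omega), mul_comm]
    omega
  have h1 := lower_nat f hf hf1 hle k S hS n P hP
  have h2 : ∑ p ∈ Finset.Icc 1 P, f p ≤
      (4 * (k + 1) + 1) * ∑ p ∈ Finset.Icc (4 * (k + 1)) P, f p := by
    have hsp : Finset.Icc 1 P ⊆ Finset.Ico 1 (4 * (k + 1)) ∪ Finset.Icc (4 * (k + 1)) P := by
      intro a ha
      simp only [Finset.mem_union, Finset.mem_Icc, Finset.mem_Ico] at *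
      omega
    have a1 : ∑ p ∈ Finset.Icc 1 P, f p ≤ ∑ p ∈ Finset.Ico 1 (4 * (k + 1)), f p
        + ∑ p ∈ Finset.Icc (4 * (k + 1)) P, f p := by
      refine (Finset.sum_le_sum_of_subset hsp).trans ?_
      rw [Finset.sum_union]
      rw [Finset.disjoint_left]
      intro a ha hb
      simp only [Finset.mem_Icc, Finset.mem_Ico] at *
      omega
    have a2 : f (4 * (k + 1)) ≤ ∑ p ∈ Finset.Icc (4 * (k + 1)) P, f p :=
      Finset.single_le_sum (f := f) (fun _ _ => Nat.zero_le _) (by simp [hPk])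
    have a3 : ∑ p ∈ Finset.Ico 1 (4 * (k + 1)), f p ≤
        (Finset.Ico 1 (4 * (k + 1))).card • f (4 * (k + 1)) := by
      apply Finset.sum_le_card_nsmul
      intro p hp
      simp only [Finset.mem_Ico] at hp
      exact hmono _ _ hp.1 (by omega)
    rw [Nat.card_Ico, smul_eq_mul] at a3
    have a4 : (4 * (k + 1) - 1) * f (4 * (k + 1)) ≤
        (4 * (k + 1)) * ∑ p ∈ Finset.Icc (4 * (k + 1)) P, f p :=
      Nat.mul_le_mul (by omega) a2
    rw [add_mul, one_mul]
    omega
  have h3 : ∑ p ∈ Finset.Icc 1 P, f p ≤ (4 * (k + 1) + 1) * accComplexity S n :=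
    h2.trans (by gcongr)
  have h4 : (∑ p ∈ Finset.Icc 1 P, (f p : ℝ)) ≤ (4 * (k + 1) + 1) * (accComplexity S n : ℝ) := by
    exact_mod_cast h3
  rw [one_div, inv_mul_le_iff₀ (by positivity)]
  exact h4

lemma no_linear (f : ℕ → ℕ) (htend : ∀ M : ℕ, ∃ N : ℕ, ∀ n : ℕ, N ≤ n → M ≤ f n)
    (a : ℕ → ℕ) (k : ℕ) (hk : 1 ≤ k) (K C : ℝ) (hK : 0 < K) (N : ℕ)
    (h : ∀ n : ℕ, N ≤ n →
      K * (∑ p ∈ Finset.Icc 1 ((n - 2) / (2 * (2 * k - 1))), (f p : ℝ)) ≤ (a n : ℝ))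
    (hC : ∀ n : ℕ, 1 ≤ n → (a n : ℝ) ≤ C * n) : False := by
  obtain ⟨k, rfl⟩ : ∃ i, k = i + 1 := ⟨k - 1, by omega⟩
  have hkk : 2 * (2 * (k + 1) - 1) = 4 * k + 2 := by omega
  rw [hkk] at h
  obtain ⟨M, hM⟩ := exists_nat_gt ((|C| * (8 * k + 8)) / K)
  obtain ⟨N0, hN0⟩ := htend M
  set R := N + N0 + 1 with hR
  have h1 := h ((4 * k + 2) * (2 * R) + 2) (by nlinarith)
  rw [Nat.add_sub_cancel, Nat.mul_div_cancel_left _ (by omega)] at h1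
  have h2 := hC ((4 * k + 2) * (2 * R) + 2) (by omega)
  have h3 : (R : ℝ) * M ≤ ∑ p ∈ Finset.Icc 1 (2 * R), (f p : ℝ) := by
    have b1 : ∑ p ∈ Finset.Ioc R (2 * R), f p ≤ ∑ p ∈ Finset.Icc 1 (2 * R), f p := by
      apply Finset.sum_le_sum_of_subset
      intro z hz
      simp only [Finset.mem_Icc, Finset.mem_Ioc] at *
      omega
    have b2 : (Finset.Ioc R (2 * R)).card • M ≤ ∑ p ∈ Finset.Ioc R (2 * R), f p := by
      apply Finset.card_nsmul_le_sum
      intro z hz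
      simp only [Finset.mem_Ioc] at hz
      exact hN0 z (by omega)
    rw [Nat.card_Ioc, smul_eq_mul, show 2 * R - R = R by omega] at b2
    exact_mod_cast b2.trans b1
  have hR1 : (1 : ℝ) ≤ R := by exact_mod_cast (by omega : 1 ≤ R)
  have h4 : C * (((4 * k + 2) * (2 * R) + 2 : ℕ) : ℝ) ≤ |C| * ((8 * k + 8) * R) := by
    have c1 : (((4 * k + 2) * (2 * R) + 2 : ℕ) : ℝ) ≤ (8 * k + 8) * R := by
      push_cast
      nlinarith
    calc _ ≤ |C| * (((4 * k + 2) * (2 * R) + 2 : ℕ) : ℝ) := by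
          gcongr; exact le_abs_self C
      _ ≤ _ := by gcongr
  rw [div_lt_iff₀ hK] at hM
  have h5 : K * (R * M) ≤ |C| * ((8 * k + 8) * R) :=
    (mul_le_mul_of_nonneg_left h3 hK.le).trans (h1.trans (h2.trans h4))
  nlinarith

/-- for any non-decreasing `f` with `f(1) = 1`, `f(n) ≤ n` and
`f(n) → ∞`, there is `x ∈ {a,b}^ℕ` with `p_x(n) = O(n² f(n))` such that whenever
`Fac(x) ⊆ S^k`, `p*_S(n) = Ω(Σ_{p=1}^{⌊(n-2)/(2(2k-1))⌋} f(p))`; consequently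
`d₀(x) = d*₁(x) = +∞`. -/
theorem stmt18 (f : ℕ → ℕ) (hf1 : f 1 = 1)
    (hmono : ∀ m n : ℕ, 1 ≤ m → m ≤ n → f m ≤ f n)
    (hle : ∀ n : ℕ, 1 ≤ n → f n ≤ n)
    (htend : ∀ M : ℕ, ∃ N : ℕ, ∀ n : ℕ, N ≤ n → M ≤ f n) :
    ∃ x : ℕ → Bool,
      (∃ C : ℝ, ∀ n : ℕ, 1 ≤ n →
        (complexity (Fac x) n : ℝ) ≤ C * (n : ℝ) ^ 2 * f n) ∧
      (∀ k : ℕ, 1 ≤ k → ∀ S : Set (List Bool), Fac x ⊆ powL S k →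
        ∃ K : ℝ, 0 < K ∧ ∃ N : ℕ, ∀ n : ℕ, N ≤ n →
          K * (∑ p ∈ Finset.Icc 1 ((n - 2) / (2 * (2 * k - 1))), (f p : ℝ)) ≤
            (accComplexity S n : ℝ)) ∧
      polyDim 0 (Fac x) = ⊤ ∧ polyDimStar 1 (Fac x) = ⊤ := by
  have hf : ∀ n, 1 ≤ n → 1 ≤ f n := fun n hn => hf1 ▸ hmono 1 n le_rfl hn
  have hlow := lower f hf hf1 hmono hle
  have key : ∀ (m : ℕ) (S : Set (List Bool)), 1 ≤ m → Fac (xW f) ⊆ powL S m → ∀ C : ℝ,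
      (∀ n : ℕ, 1 ≤ n → (accComplexity S n : ℝ) ≤ C * n) → False := by
    intro m S hm hS C hC
    obtain ⟨K, hK, N, h⟩ := hlow m hm S hS
    exact no_linear f htend _ m hm K C hK N h hC
  refine ⟨xW f, ⟨10, fun n hn => ?_⟩, hlow, ?_, ?_⟩
  · exact_mod_cast upper f hf hf1 hmono hle n hn
  · unfold polyDim
    rw [sInf_eq_top]
    rintro a ⟨m, -, hm, S, ⟨C, hC⟩, hS⟩
    exfalso
    refine key m S hm hS (C + complexity S 0) fun n hn => ?_
    unfold accComplexity
    rw [Finset.sum_range_succ']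
    push_cast
    have h1 : ∑ i ∈ Finset.range n, (complexity S (i + 1) : ℝ) ≤
        (Finset.range n).card • C := by
      apply Finset.sum_le_card_nsmul
      intro i _
      simpa using hC (i + 1) (by omega)
    rw [Finset.card_range, nsmul_eq_mul] at h1
    have h2 : (1 : ℝ) ≤ n := by exact_mod_cast hn
    have h3 : (0 : ℝ) ≤ complexity S 0 := by positivity
    nlinarith
  · unfold polyDimStar
    rw [sInf_eq_top]
    rintro a ⟨m, -, hm, S, ⟨C, hC⟩, hS⟩
    exfalso
    exact key m S hm hS C fun n hn => by simpa using hC n hn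
end
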